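/- arXiv:1907.06122 — 2 statements merged into one kernel-verified Lean document; each statement's English description precedes it below -/
import Mathlib

section
/- Let n be even, let Ω ⊂ ℝⁿ be a bounded open convex set with nonempty interior, and let f be a continuous function on the closure of Ω that is positive and subharmonic on Ω (Δf ≥ 0). Then (1/|Ω|) ∫_Ω f dx ≤ ((n²+n)/√(n+2)) · (1/|∂Ω|) ∫_{∂Ω} f dσ. -/
open MeasureTheory

/-- The Laplacian of `f : ℝⁿ → ℝ`, as the sum of the second partial derivatives. -/
noncomputable def laplacian {n : ℕ} (f : EuclideanSpace ℝ (Fin n) → ℝ)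
    (x : EuclideanSpace ℝ (Fin n)) : ℝ :=
  ∑ i : Fin n,
    fderiv ℝ (fun y => fderiv ℝ f y (EuclideanSpace.single i (1 : ℝ))) x
      (EuclideanSpace.single i (1 : ℝ))


abbrev HHE (n : ℕ) := EuclideanSpace ℝ (Fin n)

lemma hh_slice {n : ℕ} (ν : HHE n) (hν : ‖ν‖ = 1) {t : Set (HHE n)} (ht : MeasurableSet t) :
    volume t = ∫⁻ s : ℝ, μHE[n-1] (t ∩ {x | inner ℝ ν x = s}) := by
  have hν0 : ν ≠ 0 := by
    intro h; simp [h] at hν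
  have h := EuclideanGeometry.euclideanHausdorffMeasure_eq_lintegral (0 : HHE n) hν0 ht
  have h2 : (μHE[Module.finrank ℝ (HHE n)] : Measure (HHE n)) = volume :=
    InnerProductSpace.euclideanHausdorffMeasure_eq_volume
  rw [h2] at h
  rw [h]
  have : ‖ν‖ₑ = 1 := by
    rw [← ofReal_norm, hν]; simp
  rw [this, one_mul, finrank_euclideanSpace_fin]
  congr 1
  ext s
  congr 2
  ext x
  simp only [SetLike.mem_coe, AffineSubspace.mem_mk', Set.mem_ofPred_eq]
  rw [Submodule.mem_orthogonal_singleton_iff_inner_right]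
  simp [inner_sub_right, inner_smul_right, hν, sub_eq_zero]

lemma hh_prism {n : ℕ} (ν : HHE n) (hν : ‖ν‖ = 1) (h a b : ℝ) {F : Set (HHE n)}
    (hF : MeasurableSet F) (hFH : F ⊆ {x | inner ℝ ν x = h}) :
    volume ({x : HHE n | inner ℝ ν x ∈ Set.Ioc a b} ∩ (fun x => x + (h - inner ℝ ν x) • ν) ⁻¹' F)
      = ENNReal.ofReal (b - a) * μHE[n-1] F := by
  rw [hh_slice ν hν]
  · have : ∀ s : ℝ, μHE[n-1] (({x : HHE n | inner ℝ ν x ∈ Set.Ioc a b} ∩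
        (fun x => x + (h - inner ℝ ν x) • ν) ⁻¹' F) ∩ {x | inner ℝ ν x = s})
        = (Set.Ioc a b).indicator (fun _ => μHE[n-1] F) s := by
      intro s
      by_cases hs : s ∈ Set.Ioc a b
      · rw [Set.indicator_of_mem hs]
        rw [← measure_preimage_add_right (μHE[n-1]) ((h - s) • ν) F]
        congr 1
        ext x
        constructor
        · rintro ⟨⟨h1, h2⟩, h3⟩
          simp only [Set.mem_ofPred_eq] at h3
          simp only [Set.mem_preimage] at h2 ⊢
          rwa [h3] at h2
        · intro hx
          simp only [Set.mem_preimage] at hx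
          have h3 : inner ℝ ν x = s := by
            have := hFH hx
            simp [inner_add_right, inner_smul_right, hν] at this
            linarith
          refine ⟨⟨?_, ?_⟩, h3⟩
          · simpa [h3] using hs
          · simp only [Set.mem_preimage]; rwa [h3]
      · rw [Set.indicator_of_notMem hs]
        convert measure_empty (μ := (μHE[n-1] : Measure (HHE n)))
        ext x
        simp only [Set.mem_inter_iff, Set.mem_ofPred_eq, Set.mem_empty_iff_false, iff_false]
        rintro ⟨⟨h1, h2⟩, h3⟩
        exact hs (h3 ▸ h1)
    simp_rw [this]
    rw [lintegral_indicator measurableSet_Ioc]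
    simp [mul_comm]
  · refine MeasurableSet.inter ?_ ?_
    · have : Continuous (fun x : HHE n => inner ℝ ν x) := by fun_prop
      exact this.measurable measurableSet_Ioc
    · have : Continuous (fun x : HHE n => x + (h - inner ℝ ν x) • ν) := by fun_prop
      exact this.measurable hF

lemma hh_map {n : ℕ} (ν : HHE n) (hν : ‖ν‖ = 1) (h a b : ℝ) :
    (volume.restrict {x : HHE n | inner ℝ ν x ∈ Set.Ioc a b}).map
      (fun x => x + (h - inner ℝ ν x) • ν)
      = ENNReal.ofReal (b - a) • (μHE[n-1]).restrict {x : HHE n | inner ℝ ν x = h} := by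
  have hc : Continuous (fun x : HHE n => x + (h - inner ℝ ν x) • ν) := by fun_prop
  have hH : MeasurableSet {x : HHE n | inner ℝ ν x = h} := by
    have : Continuous (fun x : HHE n => inner ℝ ν x) := by fun_prop
    exact (isClosed_eq this continuous_const).measurableSet
  ext F hF
  rw [Measure.map_apply hc.measurable hF, Measure.restrict_apply (hc.measurable hF),
    Measure.smul_apply, Measure.restrict_apply hF, smul_eq_mul,
    ← hh_prism ν hν h a b (hF.inter hH) Set.inter_subset_right, Set.inter_comm]
  congr 2
  ext x
  simp [inner_add_right, inner_smul_right, hν]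


def hhP {n : ℕ} {ι : Type} (ν : ι → HHE n) (h : ι → ℝ) : Set (HHE n) :=
  {x | ∀ i, inner ℝ (ν i) x ≤ h i}

def hhF {n : ℕ} {ι : Type} (ν : ι → HHE n) (h : ι → ℝ) (i : ι) : Set (HHE n) :=
  {x | x ∈ hhP ν h ∧ inner ℝ (ν i) x = h i}

lemma hhP_closed {n : ℕ} {ι : Type} (ν : ι → HHE n) (h : ι → ℝ) : IsClosed (hhP ν h) := by
  have : hhP ν h = ⋂ i, {x | inner ℝ (ν i) x ≤ h i} := by ext x; simp [hhP]
  rw [this]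
  exact isClosed_iInter fun i => isClosed_le (by fun_prop) continuous_const

lemma hhF_closed {n : ℕ} {ι : Type} (ν : ι → HHE n) (h : ι → ℝ) (i : ι) :
    IsClosed (hhF ν h i) :=
  (hhP_closed ν h).inter (isClosed_eq (f := fun x : HHE n => inner ℝ (ν i) x) (by fun_prop) continuous_const)

lemma hhP_convex {n : ℕ} {ι : Type} (ν : ι → HHE n) (h : ι → ℝ) : Convex ℝ (hhP ν h) := by
  intro x hx y hy a b ha hb hab i
  rw [inner_add_right, inner_smul_right, inner_smul_right]
  have h1 := mul_le_mul_of_nonneg_left (hx i) ha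
  have h2 := mul_le_mul_of_nonneg_left (hy i) hb
  have : h i = a * h i + b * h i := by rw [← add_mul, hab, one_mul]
  linarith

lemma hh_inner_le_one {n : ℕ} {a b : HHE n} (ha : ‖a‖ = 1) (hb : ‖b‖ = 1) : inner ℝ a b ≤ 1 := by
  have := real_inner_le_norm a b
  simpa [ha, hb] using this

lemma hh_layer {n : ℕ} {ι : Type} [Fintype ι] (ν : ι → HHE n) (h : ι → ℝ)
    (hν : ∀ i, ‖ν i‖ = 1) (ε : ℝ) (ω : ENNReal) (G : HHE n → ENNReal) (hG : Measurable G)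
    (hω : ∀ x ∈ hhP ν h, ∀ y ∈ hhP ν h, dist x y < ε → G x ≤ G y + ω) :
    ∫⁻ x in {x | x ∈ hhP ν h ∧ ∃ i, h i - ε < inner ℝ (ν i) x}, G x
      ≤ ENNReal.ofReal ε * ∑ i, ((∫⁻ x in hhF ν h i, G x ∂μHE[n-1]) + ω * μHE[n-1] (hhF ν h i)) := by
  set π : ι → HHE n → HHE n := fun i x => x + (h i - inner ℝ (ν i) x) • ν i with hπ
  have hπc : ∀ i, Continuous (π i) := fun i => by simp only [hπ]; fun_prop
  set S : ι → Set (HHE n) := fun i => {x | inner ℝ (ν i) x ∈ Set.Ioc (h i - ε) (h i)} with hS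
  have hSm : ∀ i, MeasurableSet (S i) := fun i => by
    have : Continuous (fun x : HHE n => inner ℝ (ν i) x) := by fun_prop
    exact this.measurable measurableSet_Ioc
  have hFm : ∀ i, MeasurableSet (hhF ν h i) := fun i => (hhF_closed ν h i).measurableSet
  have hsub : {x | x ∈ hhP ν h ∧ ∃ i, h i - ε < inner ℝ (ν i) x} ⊆
      ⋃ i, (hhP ν h ∩ (S i ∩ π i ⁻¹' hhF ν h i)) := by
    rintro x ⟨hx, i0, hi0⟩
    have : Nonempty ι := ⟨i0⟩
    obtain ⟨i, hi⟩ := Finite.exists_min (fun i => h i - inner ℝ (ν i) x)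
    refine Set.mem_iUnion.2 ⟨i, hx, ⟨?_, hx i⟩, ?_⟩
    · have := hi i0; linarith
    · refine ⟨fun j => ?_, ?_⟩
      · simp only [hπ, inner_add_right, inner_smul_right]
        have h1 := hi j
        have h2 := hh_inner_le_one (hν j) (hν i)
        have h3 := hx i
        nlinarith
      · simp [hπ, inner_add_right, inner_smul_right, hν]
  calc _ ≤ ∫⁻ x in ⋃ i, (hhP ν h ∩ (S i ∩ π i ⁻¹' hhF ν h i)), G x := lintegral_mono_set hsub
    _ ≤ ∑' i, ∫⁻ x in (hhP ν h ∩ (S i ∩ π i ⁻¹' hhF ν h i)), G x := lintegral_iUnion_le _ _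
    _ = ∑ i, ∫⁻ x in (hhP ν h ∩ (S i ∩ π i ⁻¹' hhF ν h i)), G x := tsum_fintype _
    _ ≤ ∑ i, ENNReal.ofReal ε * ((∫⁻ x in hhF ν h i, G x ∂μHE[n-1]) + ω * μHE[n-1] (hhF ν h i)) := by
        refine Finset.sum_le_sum fun i _ => ?_
        have e1 : ∫⁻ x in (hhP ν h ∩ (S i ∩ π i ⁻¹' hhF ν h i)), G x ≤
            ∫⁻ x in (hhP ν h ∩ (S i ∩ π i ⁻¹' hhF ν h i)), (G (π i x) + ω) := by
          refine setLIntegral_mono' ((hhP_closed ν h).measurableSet.inter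
            ((hSm i).inter ((hπc i).measurable (hFm i)))) ?_
          rintro x ⟨hx, ⟨h1, h2⟩, h3⟩
          refine hω x hx _ h3.1 ?_
          simp only [hπ, dist_self_add_right, norm_smul, hν, mul_one, Real.norm_eq_abs]
          rw [abs_of_nonneg (by linarith)]; linarith
        refine e1.trans ?_
        have e2 : ∫⁻ x in (hhP ν h ∩ (S i ∩ π i ⁻¹' hhF ν h i)), (G (π i x) + ω) ≤
            ∫⁻ x in S i ∩ π i ⁻¹' hhF ν h i, (G (π i x) + ω) :=
          lintegral_mono_set Set.inter_subset_right
        refine e2.trans (le_of_eq ?_)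
        have e3 : ∫⁻ x in S i ∩ π i ⁻¹' hhF ν h i, (G (π i x) + ω) =
            ∫⁻ x in S i, (hhF ν h i).indicator (fun y => G y + ω) (π i x) := by
          rw [Set.inter_comm, ← setLIntegral_indicator ((hπc i).measurable (hFm i))]
          rfl
        rw [e3]
        have hm : Measurable ((hhF ν h i).indicator (fun y => G y + ω)) :=
          (hG.add_const ω).indicator (hFm i)
        rw [← lintegral_map (f := (hhF ν h i).indicator (fun y => G y + ω)) hm (hπc i).measurable]
        rw [hh_map (ν i) (hν i) (h i) (h i - ε) (h i)]
        rw [lintegral_smul_measure, setLIntegral_indicator (hFm i), sub_sub_cancel, smul_eq_mul]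
        congr 1
        have : hhF ν h i ∩ {x | inner ℝ (ν i) x = h i} = hhF ν h i :=
          Set.inter_eq_left.2 fun x hx => hx.2
        rw [this, lintegral_add_right _ measurable_const, setLIntegral_const]
    _ = _ := by rw [Finset.mul_sum]

lemma hh_pow_bound (n : ℕ) {δ : ℝ} (hδ : 0 ≤ δ) : (1 + δ) ^ n - 1 ≤ n * δ * (1 + δ) ^ n := by
  induction n with
  | zero => simp
  | succ k ih =>
    have h1 : (1:ℝ) ≤ (1 + δ) ^ k := one_le_pow₀ (by linarith)
    push_cast
    rw [pow_succ]
    have h2 : 0 ≤ (k:ℝ) * δ := by positivity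
    nlinarith [mul_nonneg hδ (by linarith : (0:ℝ) ≤ (1 + δ) ^ k), mul_nonneg h2 (by positivity : (0:ℝ) ≤ (1 + δ) ^ k * δ), mul_nonneg hδ (mul_nonneg hδ (by linarith : (0:ℝ) ≤ (1 + δ) ^ k))]

lemma hh_perim {n : ℕ} {ι : Type} [Fintype ι] (ν : ι → HHE n) (h : ι → ℝ)
    (hν : ∀ i, ‖ν i‖ = 1) (hinj : Function.Injective ν)
    (hb : Bornology.IsBounded (hhP ν h)) (c : HHE n) (r : ℝ) (hr : 0 < r)
    (hc : ∀ i, inner ℝ (ν i) c + r ≤ h i) :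
    ENNReal.ofReal r * ∑ i, μHE[n-1] (hhF ν h i) ≤ n * volume (hhP ν h) := by
  set v := volume (hhP ν h) with hv
  have hvfin : v ≠ ⊤ := hb.measure_lt_top.ne
  set S := ∑ i, μHE[n-1] (hhF ν h i) with hS
  have hFm : ∀ i, MeasurableSet (hhF ν h i) := fun i => (hhF_closed ν h i).measurableSet
  have key : ∀ δ : ℝ, 0 < δ → ENNReal.ofReal (δ * r) * S + v ≤ ENNReal.ofReal ((1 + δ) ^ n) * v := by
    intro δ hδ
    set A : ι → Set (HHE n) := fun i => {x | inner ℝ (ν i) x ∈ Set.Ioc (h i) (h i + δ * r)} ∩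
      (fun x => x + (h i - inner ℝ (ν i) x) • ν i) ⁻¹' (hhF ν h i) with hA
    have hAm : ∀ i, MeasurableSet (A i) := fun i => by
      have h1 : Continuous (fun x : HHE n => inner ℝ (ν i) x) := by fun_prop
      have h2 : Continuous (fun x : HHE n => x + (h i - inner ℝ (ν i) x) • ν i) := by fun_prop
      exact (h1.measurable measurableSet_Ioc).inter (h2.measurable (hFm i))
    have hAv : ∀ i, volume (A i) = ENNReal.ofReal (δ * r) * μHE[n-1] (hhF ν h i) := fun i => by
      have := hh_prism (ν i) (hν i) (h i) (h i) (h i + δ * r) (hFm i) (fun x hx => hx.2)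
      rwa [add_sub_cancel_left] at this
    have hAd : Pairwise (Function.onFun Disjoint A) := by
      intro i j hij
      rw [Function.onFun, Set.disjoint_left]
      rintro x ⟨⟨hi1, hi2⟩, hi3⟩ ⟨⟨hj1, hj2⟩, hj3⟩
      apply hij
      set p := x + (h i - inner ℝ (ν i) x) • ν i with hp
      set q := x + (h j - inner ℝ (ν j) x) • ν j with hq
      have hip : p ∈ hhF ν h i := hi3
      have hjq : q ∈ hhF ν h j := hj3
      have hqi := hjq.1 i
      have hpj := hip.1 j
      have hpi := hip.2
      have hqj := hjq.2
      set s := inner ℝ (ν i) x - h i with hs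
      set t := inner ℝ (ν j) x - h j with ht
      have hs0 : 0 < s := by linarith
      have ht0 : 0 < t := by linarith
      have hxp : p = x - s • ν i := by rw [hp, hs, sub_smul, sub_smul]; abel
      have hxq : q = x - t • ν j := by rw [hq, ht, sub_smul, sub_smul]; abel
      have hdiff : q - p = s • ν i - t • ν j := by rw [hxp, hxq]; abel
      have hn : inner ℝ (q - p) (q - p) ≤ 0 := by
        have e : inner ℝ (q - p) (q - p) = inner ℝ (s • ν i - t • ν j) (q - p) := by rw [← hdiff]
        rw [e, inner_sub_left, inner_smul_left, inner_smul_left, inner_sub_right, inner_sub_right]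
        simp only [conj_trivial]
        have h1 : s * (inner ℝ (ν i) q - inner ℝ (ν i) p) ≤ 0 :=
          mul_nonpos_of_nonneg_of_nonpos hs0.le (by linarith)
        have h2 : 0 ≤ t * (inner ℝ (ν j) q - inner ℝ (ν j) p) :=
          mul_nonneg ht0.le (by linarith)
        linarith
      have hqp : q - p = 0 := by
        rw [real_inner_self_eq_norm_sq] at hn
        have : ‖q - p‖ = 0 := by nlinarith [norm_nonneg (q - p)]
        simpa using this
      rw [hqp] at hdiff
      have heq : s • ν i = t • ν j := (sub_eq_zero.1 hdiff.symm)
      have hst : s = t := by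
        have := congrArg norm heq
        rw [norm_smul, norm_smul, hν, hν, Real.norm_of_nonneg hs0.le, Real.norm_of_nonneg ht0.le] at this
        linarith
      rw [hst] at heq
      exact hinj (smul_right_injective _ ht0.ne' heq)
    have hsub : (⋃ i, A i) ∪ hhP ν h ⊆ AffineMap.homothety c (1 + δ) '' hhP ν h := by
      have hmem : ∀ x : HHE n, (∀ j, inner ℝ (ν j) x ≤ h j + δ * r) →
          x ∈ AffineMap.homothety c (1 + δ) '' hhP ν h := by
        intro x hx
        refine ⟨c + (1 + δ)⁻¹ • (x - c), fun j => ?_, ?_⟩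
        · rw [inner_add_right, inner_smul_right, inner_sub_right]
          have h1 := hx j
          have h2 := hc j
          have h3 : (inner ℝ (ν j) x - inner ℝ (ν j) c) ≤ (1 + δ) * (h j - inner ℝ (ν j) c) := by
            nlinarith
          have h4 : (1 + δ)⁻¹ * (inner ℝ (ν j) x - inner ℝ (ν j) c) ≤ (h j - inner ℝ (ν j) c) := by
            rw [inv_mul_le_iff₀ (by linarith)]; exact h3
          linarith
        · rw [AffineMap.homothety_apply]
          simp only [vsub_eq_sub, vadd_eq_add, add_sub_cancel_left]
          rw [smul_smul, mul_inv_cancel₀ (by linarith), one_smul]; abel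
      rintro x (hx | hx)
      · obtain ⟨i, ⟨⟨hi1, hi2⟩, hi3⟩⟩ := Set.mem_iUnion.1 hx
        apply hmem
        intro j
        have := hi3.1 j
        rw [inner_add_right, inner_smul_right] at this
        have h2 := hh_inner_le_one (hν j) (hν i)
        nlinarith
      · apply hmem
        intro j
        have := hx j
        have : 0 < δ * r := by positivity
        linarith
    have hdisj : Disjoint (⋃ i, A i) (hhP ν h) := by
      rw [Set.disjoint_left]
      intro x hx hxP
      obtain ⟨i, ⟨⟨hi1, hi2⟩, hi3⟩⟩ := Set.mem_iUnion.1 hx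
      exact absurd (hxP i) (not_le.2 hi1)
    have h1 := measure_mono (μ := volume) hsub
    rw [measure_union hdisj (hhP_closed ν h).measurableSet, measure_iUnion hAd hAm, tsum_fintype,
      Measure.addHaar_image_homothety, finrank_euclideanSpace_fin] at h1
    simp_rw [hAv] at h1
    rw [← Finset.mul_sum, abs_of_nonneg (by positivity)] at h1
    exact h1
  have hSfin : S ≠ ⊤ := by
    intro hS'
    have := key 1 one_pos
    rw [hS', ENNReal.mul_top (by simpa using hr)] at this
    rw [top_add, top_le_iff] at this
    exact (ENNReal.mul_ne_top ENNReal.ofReal_ne_top hvfin) this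
  have key2 : ∀ δ : ℝ, 0 < δ → r * S.toReal ≤ n * (1 + δ) ^ n * v.toReal := by
    intro δ hδ
    have := key δ hδ
    have h2 := ENNReal.toReal_mono (ENNReal.mul_ne_top ENNReal.ofReal_ne_top hvfin) this
    rw [ENNReal.toReal_add (ENNReal.mul_ne_top ENNReal.ofReal_ne_top hSfin) hvfin,
      ENNReal.toReal_mul, ENNReal.toReal_mul, ENNReal.toReal_ofReal (by positivity),
      ENNReal.toReal_ofReal (by positivity)] at h2
    have h3 := hh_pow_bound n hδ.le
    have h4 : δ * r * S.toReal ≤ n * δ * (1 + δ) ^ n * v.toReal := by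
      have := mul_le_mul_of_nonneg_right h3 (ENNReal.toReal_nonneg (a := v))
      linarith
    have h5 : δ * (r * S.toReal) ≤ δ * (n * (1 + δ) ^ n * v.toReal) := by linarith
    exact le_of_mul_le_mul_left h5 hδ
  have key3 : r * S.toReal ≤ n * v.toReal := by
    have ht : Filter.Tendsto (fun δ : ℝ => n * (1 + δ) ^ n * v.toReal) (nhdsWithin 0 (Set.Ioi 0))
        (nhds (n * (1 + 0) ^ n * v.toReal)) := by
      apply Filter.Tendsto.mono_left _ nhdsWithin_le_nhds
      have : Continuous (fun δ : ℝ => n * (1 + δ) ^ n * v.toReal) := by fun_prop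
      exact this.tendsto 0
    have := ge_of_tendsto ht (Filter.eventually_of_mem self_mem_nhdsWithin fun δ hδ => key2 δ hδ)
    simpa using this
  rw [← ENNReal.ofReal_toReal hSfin, ← ENNReal.ofReal_toReal hvfin, ← ENNReal.ofReal_mul hr.le,
    ← ENNReal.ofReal_natCast, ← ENNReal.ofReal_mul (by positivity)]
  exact ENNReal.ofReal_le_ofReal key3

lemma hh_hyper_null {n : ℕ} (a : HHE n) (ha : a ≠ 0) (t : ℝ) :
    volume {x : HHE n | inner ℝ a x = t} = 0 := by
  by_cases hne : ∃ x0 : HHE n, inner ℝ a x0 = t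
  · obtain ⟨x0, hx0⟩ := hne
    have : {x : HHE n | inner ℝ a x = t} = (AffineSubspace.mk' x0 (Submodule.span ℝ {a})ᗮ : Set (HHE n)) := by
      ext x
      simp only [SetLike.mem_coe, AffineSubspace.mem_mk', Set.mem_ofPred_eq]
      rw [Submodule.mem_orthogonal_singleton_iff_inner_right]
      simp [inner_sub_right, hx0, sub_eq_zero]
    rw [this]
    apply Measure.addHaar_affineSubspace
    intro htop
    have h1 : x0 + a ∈ AffineSubspace.mk' x0 (Submodule.span ℝ {a})ᗮ := by rw [htop]; trivial
    rw [AffineSubspace.mem_mk', Submodule.mem_orthogonal_singleton_iff_inner_right] at h1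
    simp at h1
    exact ha h1
  · convert measure_empty (μ := (volume : Measure (HHE n)))
    ext x
    simp only [Set.mem_ofPred_eq, Set.mem_empty_iff_false, iff_false]
    exact fun hx => hne ⟨x, hx⟩

lemma hh_overlap {n : ℕ} {ι : Type} (ν : ι → HHE n) (h : ι → ℝ)
    (hν : ∀ i, ‖ν i‖ = 1) (hinj : Function.Injective ν) (c : HHE n)
    (hc : ∀ i, inner ℝ (ν i) c < h i) {i j : ι} (hij : i ≠ j) :
    μHE[n-1] (hhF ν h i ∩ hhF ν h j) = 0 := by
  by_cases h0 : ν j - (inner ℝ (ν i) (ν j) : ℝ) • ν i = 0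
  · have h1 : ν j = (inner ℝ (ν i) (ν j) : ℝ) • ν i := sub_eq_zero.1 h0
    set k : ℝ := inner ℝ (ν i) (ν j) with hk
    have h2 : |k| = 1 := by
      have := congrArg norm h1
      rw [norm_smul, hν, hν] at this
      simpa using this.symm
    have hk1 : k = -1 := by
      rcases eq_or_eq_neg_of_abs_eq h2 with h3 | h3
      · rw [h3, one_smul] at h1
        exact absurd (hinj h1).symm hij
      · exact h3
    rw [hk1] at h1
    convert measure_empty (μ := (μHE[n-1] : Measure (HHE n)))
    ext x
    simp only [Set.mem_inter_iff, Set.mem_empty_iff_false, iff_false]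
    rintro ⟨hx1, hx2⟩
    have h3 := hx1.2
    have h4 := hx2.2
    have h5 := hc i
    have h6 := hc j
    rw [h1] at h4 h6
    simp at h4 h6
    linarith
  · have h1 := hh_prism (ν i) (hν i) (h i) 0 1
      (F := hhF ν h i ∩ hhF ν h j) ((hhF_closed ν h i).inter (hhF_closed ν h j)).measurableSet
      (fun x hx => hx.1.2)
    rw [sub_zero, ENNReal.ofReal_one, one_mul] at h1
    rw [← h1]
    refine measure_mono_null ?_ (hh_hyper_null _ h0 (h j - h i * inner ℝ (ν i) (ν j)))
    rintro x ⟨_, hx1, hx2⟩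
    have h3 := hx2.2
    simp only [Set.mem_ofPred_eq]
    rw [inner_sub_left, inner_smul_left]
    rw [inner_add_right, inner_smul_right, real_inner_comm (ν i) (ν j)] at h3
    simp only [conj_trivial]
    linarith

lemma hh_second_deriv_max {γ : ℝ → ℝ} (hm : IsLocalMax γ 0) (hc : ContinuousAt γ 0) :
    deriv (deriv γ) 0 ≤ 0 := by
  by_contra! hpos
  have hmin := isLocalMin_of_deriv_deriv_pos hpos hm.deriv_eq_zero hc
  have hconst : γ =ᶠ[nhds 0] fun _ => γ 0 := by
    filter_upwards [hm, hmin] with x h1 h2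
    exact le_antisymm h1 h2
  have h1 : deriv γ =ᶠ[nhds 0] deriv (fun _ => γ 0) := hconst.deriv
  have h2 := h1.deriv_eq
  rw [h2] at hpos
  simp at hpos

lemma hh_lap_max {n : ℕ} {G : HHE n → ℝ} {x : HHE n} (hm : IsLocalMax G x)
    (h1 : ∀ᶠ y in nhds x, DifferentiableAt ℝ G y)
    (h2 : DifferentiableAt ℝ (fun y => fderiv ℝ G y) x) : laplacian G x ≤ 0 := by
  refine Finset.sum_nonpos fun i _ => ?_
  set e : HHE n := EuclideanSpace.single i (1 : ℝ) with he
  have hl : ∀ t : ℝ, HasDerivAt (fun t : ℝ => x + t • e) e t := fun t => by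
    have := ((hasDerivAt_id t).smul_const e).const_add x
    simpa using this
  have hlc : Filter.Tendsto (fun t : ℝ => x + t • e) (nhds 0) (nhds x) := by
    have : Continuous (fun t : ℝ => x + t • e) := by fun_prop
    simpa using this.tendsto 0
  set γ : ℝ → ℝ := fun t => G (x + t • e) with hγ
  have hγm : IsLocalMax γ 0 := by
    have : ∀ᶠ y in nhds x, G y ≤ G x := hm
    have h3 := hlc.eventually this
    filter_upwards [h3] with t ht
    simpa [hγ] using ht
  have hγd : deriv γ =ᶠ[nhds 0] fun t => fderiv ℝ G (x + t • e) e := by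
    filter_upwards [hlc.eventually h1] with t ht
    exact (ht.hasFDerivAt.comp_hasDerivAt t (hl t)).deriv
  have hγc : ContinuousAt γ 0 := by
    have hd : DifferentiableAt ℝ G (x + (0:ℝ) • e) := by
      have := h1.self_of_nhds; simpa using this
    exact (hd.hasFDerivAt.comp_hasDerivAt 0 (hl 0)).continuousAt
  have hfin := hh_second_deriv_max hγm hγc
  rw [hγd.deriv_eq] at hfin
  have hd2 : DifferentiableAt ℝ (fun y => fderiv ℝ G y e) (x + (0:ℝ) • e) := by
    have : DifferentiableAt ℝ (fun y => fderiv ℝ G y e) x := h2.clm_apply (differentiableAt_const e)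
    simpa using this
  have h4 := (hd2.hasFDerivAt.comp_hasDerivAt 0 (hl 0)).deriv
  have h5 : deriv (fun t : ℝ => fderiv ℝ G (x + t • e) e) 0 =
      fderiv ℝ (fun y => fderiv ℝ G y e) (x + (0:ℝ) • e) e := h4
  rw [h5] at hfin
  simpa using hfin

/-- twice differentiable near every point of `U` -/
def hhTD {n : ℕ} (F : HHE n → ℝ) (U : Set (HHE n)) : Prop :=
  (∀ x ∈ U, DifferentiableAt ℝ F x) ∧ (∀ x ∈ U, DifferentiableAt ℝ (fun y => fderiv ℝ F y) x)

lemma hhTD_add {n : ℕ} {F G : HHE n → ℝ} {U : Set (HHE n)} (hU : IsOpen U) (hF : hhTD F U)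
    (hG : hhTD G U) (a b : ℝ) : hhTD (fun x => a * F x + b * G x) U ∧
      ∀ x ∈ U, laplacian (fun x => a * F x + b * G x) x = a * laplacian F x + b * laplacian G x := by
  have key : ∀ x ∈ U, fderiv ℝ (fun x => a * F x + b * G x) x = a • fderiv ℝ F x + b • fderiv ℝ G x := by
    intro x hx
    exact (((hF.1 x hx).hasFDerivAt.const_mul a).add ((hG.1 x hx).hasFDerivAt.const_mul b)).fderiv
  refine ⟨⟨fun x hx => ((hF.1 x hx).const_mul a).add ((hG.1 x hx).const_mul b), fun x hx => ?_⟩,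
    fun x hx => ?_⟩
  · have h1 : DifferentiableAt ℝ (fun y => a • fderiv ℝ F y + b • fderiv ℝ G y) x :=
      ((hF.2 x hx).const_smul a).add ((hG.2 x hx).const_smul b)
    refine h1.congr_of_eventuallyEq ?_
    filter_upwards [hU.mem_nhds hx] with y hy using key y hy
  · unfold laplacian
    rw [Finset.mul_sum, Finset.mul_sum, ← Finset.sum_add_distrib]
    refine Finset.sum_congr rfl fun i _ => ?_
    set e : HHE n := EuclideanSpace.single i (1 : ℝ)
    have h1 : (fun y => fderiv ℝ (fun x => a * F x + b * G x) y e) =ᶠ[nhds x]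
        fun y => a * fderiv ℝ F y e + b * fderiv ℝ G y e := by
      filter_upwards [hU.mem_nhds hx] with y hy
      rw [key y hy]; simp
    rw [h1.fderiv_eq]
    have dF : DifferentiableAt ℝ (fun y => fderiv ℝ F y e) x := (hF.2 x hx).clm_apply (differentiableAt_const e)
    have dG : DifferentiableAt ℝ (fun y => fderiv ℝ G y e) x := (hG.2 x hx).clm_apply (differentiableAt_const e)
    have h2 : HasFDerivAt (fun y => a * fderiv ℝ F y e + b * fderiv ℝ G y e) _ x :=
      (dF.hasFDerivAt.const_mul a).add (dG.hasFDerivAt.const_mul b)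
    rw [h2.fderiv]
    simp

lemma hh_lap_shift {n : ℕ} (f : HHE n → ℝ) (y x : HHE n) :
    laplacian (fun x => f (x + y)) x = laplacian f (x + y) := by
  unfold laplacian
  refine Finset.sum_congr rfl fun i _ => ?_
  have : (fun z => fderiv ℝ (fun x => f (x + y)) z (EuclideanSpace.single i (1:ℝ))) =
      fun z => (fun w => fderiv ℝ f w (EuclideanSpace.single i (1:ℝ))) (z + y) := by
    ext z; rw [fderiv_comp_add_right]
  rw [this]
  exact congrArg (fun L => L (EuclideanSpace.single i (1:ℝ)))
    (fderiv_comp_add_right (𝕜 := ℝ) (x := x) (f := fun w => fderiv ℝ f w (EuclideanSpace.single i (1:ℝ))) y)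

lemma hhTD_shift {n : ℕ} {f : HHE n → ℝ} {Ω U : Set (HHE n)} (hf : hhTD f Ω) (y : HHE n)
    (hU : ∀ x ∈ U, x + y ∈ Ω) : hhTD (fun x => f (x + y)) U := by
  refine ⟨fun x hx => ?_, fun x hx => ?_⟩
  · exact (differentiableAt_comp_add_right y).2 (hf.1 _ (hU x hx))
  · have : (fun z => fderiv ℝ (fun x => f (x + y)) z) = fun z => (fun w => fderiv ℝ f w) (z + y) := by
      ext z; rw [fderiv_comp_add_right]
    rw [this]
    exact (differentiableAt_comp_add_right y).2 (hf.2 _ (hU x hx))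

lemma hh_conv_deriv {n : ℕ} {f G : HHE n → ℝ} (hf : Continuous f) (hG : ContDiff ℝ 1 G)
    (hGs : HasCompactSupport G) (e : HHE n) (x : HHE n) :
    fderiv ℝ (fun x => ∫ z, f z * G (x - z)) x e = ∫ z, f z * fderiv ℝ G (x - z) e := by
  have h := hGs.hasFDerivAt_convolution_right (ContinuousLinearMap.mul ℝ ℝ) (μ := volume)
    hf.locallyIntegrable hG x
  have h2 : (fun x => ∫ z, f z * G (x - z)) = convolution f G (ContinuousLinearMap.mul ℝ ℝ) volume := by
    ext x; simp [convolution_def]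
  rw [h2, h.fderiv, convolution_precompR_apply _ hf.locallyIntegrable (hGs.fderiv ℝ)
    (hG.continuous_fderiv one_ne_zero)]
  simp [convolution_def]

lemma hh_lap_cont {n : ℕ} {G : HHE n → ℝ} (hG : ContDiff ℝ 2 G) : Continuous (laplacian G) := by
  unfold laplacian
  refine continuous_finsetSum _ fun i _ => ?_
  have h1 : ContDiff ℝ 1 (fun y => fderiv ℝ G y (EuclideanSpace.single i (1:ℝ))) :=
    (hG.fderiv_right (m := 1) (by norm_num)).clm_apply contDiff_const
  exact (h1.continuous_fderiv one_ne_zero).clm_apply continuous_const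

lemma hh_lap_supp {n : ℕ} {G : HHE n → ℝ} (hG : HasCompactSupport G) : HasCompactSupport (laplacian G) := by
  unfold laplacian
  have : ∀ i : Fin n, HasCompactSupport fun x => fderiv ℝ (fun y => fderiv ℝ G y (EuclideanSpace.single i (1:ℝ))) x
      (EuclideanSpace.single i (1:ℝ)) := fun i =>
    HasCompactSupport.fderiv_apply (𝕜 := ℝ) (HasCompactSupport.fderiv_apply (𝕜 := ℝ) hG _) _
  have h2 : ∀ s : Finset (Fin n), HasCompactSupport fun x => ∑ i ∈ s, fderiv ℝ (fun y => fderiv ℝ G y (EuclideanSpace.single i (1:ℝ))) x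
      (EuclideanSpace.single i (1:ℝ)) := by
    intro s
    classical
    induction s using Finset.induction_on with
    | empty =>
      simp only [Finset.sum_empty]
      exact HasCompactSupport.zero
    | insert a s ha ih =>
      simp_rw [Finset.sum_insert ha]
      exact (this a).add ih
  exact h2 _

lemma hh_conv_lap {n : ℕ} {f G : HHE n → ℝ} (hf : Continuous f) (hG : ContDiff ℝ 2 G)
    (hGs : HasCompactSupport G) (x : HHE n) :
    laplacian (fun x => ∫ z, f z * G (x - z)) x = ∫ z, f z * laplacian G (x - z) := by
  have h1 : ∀ i : Fin n, fderiv ℝ (fun y => fderiv ℝ (fun x => ∫ z, f z * G (x - z)) y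
      (EuclideanSpace.single i (1:ℝ))) x (EuclideanSpace.single i (1:ℝ)) =
      ∫ z, f z * fderiv ℝ (fun y => fderiv ℝ G y (EuclideanSpace.single i (1:ℝ))) (x - z)
        (EuclideanSpace.single i (1:ℝ)) := by
    intro i
    simp_rw [hh_conv_deriv hf (hG.of_le (by norm_num)) hGs]
    have h1 : ContDiff ℝ 1 (fun y => fderiv ℝ G y (EuclideanSpace.single i (1:ℝ))) :=
      (hG.fderiv_right (m := 1) (by norm_num)).clm_apply contDiff_const
    exact hh_conv_deriv hf h1 (HasCompactSupport.fderiv_apply (𝕜 := ℝ) hGs _) _ x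
  unfold laplacian
  rw [Finset.sum_congr rfl fun i _ => h1 i, ← integral_finsetSum]
  · simp_rw [Finset.mul_sum]
  · intro i _
    have h1 : ContDiff ℝ 1 (fun y => fderiv ℝ G y (EuclideanSpace.single i (1:ℝ))) :=
      (hG.fderiv_right (m := 1) (by norm_num)).clm_apply contDiff_const
    have h2 : Continuous (fun y => fderiv ℝ (fun y => fderiv ℝ G y (EuclideanSpace.single i (1:ℝ))) y
        (EuclideanSpace.single i (1:ℝ))) := (h1.continuous_fderiv one_ne_zero).clm_apply continuous_const
    have h3 := HasCompactSupport.fderiv_apply (𝕜 := ℝ) (HasCompactSupport.fderiv_apply (𝕜 := ℝ) hGs (EuclideanSpace.single i (1:ℝ))) (EuclideanSpace.single i (1:ℝ))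
    refine Continuous.integrable_of_hasCompactSupport (hf.mul (h2.comp (by fun_prop))) ?_
    exact (h3.comp_homeomorph (Homeomorph.subLeft x)).mul_left

lemma hh_approx {n : ℕ} {Ω : Set (HHE n)} {f : HHE n → ℝ} (hfc : Continuous f)
    (hf : hhTD f Ω) (hsub : ∀ x ∈ Ω, 0 ≤ laplacian f x) {g : HHE n → ℝ} (hg : Continuous g)
    (hgs : HasCompactSupport g) (hg0 : ∀ x, 0 ≤ g x) (ρ : ℝ)
    (hΩ : ∀ y ∈ tsupport g, ∀ x ∈ Metric.ball (0 : HHE n) ρ, x + y ∈ Ω) (τ : ℝ) (hτ : 0 < τ) :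
    ∃ F : HHE n → ℝ, Continuous F ∧ hhTD F (Metric.ball 0 ρ) ∧
      (∀ x ∈ Metric.ball (0 : HHE n) ρ, 0 ≤ laplacian F x) ∧
      ∀ x ∈ Metric.ball (0 : HHE n) ρ, |F x - ∫ y, f (x + y) * g y| ≤ τ * ∫ y, g y := by
  set K := tsupport g with hK
  have hKc : IsCompact K := hgs
  have hint : Integrable g := hg.integrable_of_hasCompactSupport hgs
  have hintf : ∀ x, Integrable (fun y => f (x + y) * g y) := fun x =>
    ((hfc.comp (by fun_prop)).mul hg).integrable_of_hasCompactSupport hgs.mul_left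
  -- uniform continuity
  obtain ⟨R, hR⟩ := hKc.isBounded.subset_closedBall (0 : HHE n)
  have huc : UniformContinuousOn f (Metric.closedBall 0 (R + ρ)) :=
    (isCompact_closedBall _ _).uniformContinuousOn_of_continuous hfc.continuousOn
  obtain ⟨δ, hδ, hδf⟩ := Metric.uniformContinuousOn_iff_le.1 huc τ hτ
  obtain ⟨t, htK, htf, hcov⟩ := hKc.finite_cover_balls hδ
  have hmem : ∀ y ∈ K, ∀ x ∈ Metric.ball (0 : HHE n) ρ, x + y ∈ Metric.closedBall (0 : HHE n) (R + ρ) := by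
    intro y hy x hx
    have h1 := hR hy
    simp only [mem_closedBall_zero_iff, mem_ball_zero_iff] at *
    have := norm_add_le x y
    linarith
  have main : ∀ s : Finset (HHE n), (↑s ⊆ K) → ∀ S : Set (HHE n), MeasurableSet S → S ⊆ K →
      S ⊆ ⋃ y ∈ s, Metric.ball y δ →
      ∃ F : HHE n → ℝ, Continuous F ∧ hhTD F (Metric.ball 0 ρ) ∧
      (∀ x ∈ Metric.ball (0 : HHE n) ρ, 0 ≤ laplacian F x) ∧
      ∀ x ∈ Metric.ball (0 : HHE n) ρ, |F x - ∫ y in S, f (x + y) * g y| ≤ τ * ∫ y in S, g y := by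
    intro s
    classical
    induction s using Finset.induction_on with
    | empty =>
      intro _ S _ _ hS
      have : S = ∅ := by simpa using hS
      refine ⟨fun _ => 0, continuous_const, ⟨fun x _ => by fun_prop, fun x _ => ?_⟩, fun x _ => ?_, ?_⟩
      · simp
      · simp [laplacian]
      · simp [this]
    | insert a s ha ih =>
      intro hsK S hSm hSK hS
      have haK : a ∈ K := hsK (by simp)
      obtain ⟨F, hF1, hF2, hF3, hF4⟩ := ih (fun x hx => hsK (by simp [hx])) (S \ Metric.ball a δ)
        (hSm.diff measurableSet_ball) (Set.sdiff_subset.trans hSK) (by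
          rintro x ⟨hx, hxa⟩
          have := hS hx
          simp only [Finset.mem_insert, Set.mem_iUnion] at this ⊢
          obtain ⟨y, hy, hxy⟩ := this
          rcases hy with rfl | hy
          · exact absurd hxy hxa
          · exact ⟨y, hy, hxy⟩)
      set w := ∫ y in S ∩ Metric.ball a δ, g y with hw
      have hw0 : 0 ≤ w := integral_nonneg hg0
      have hshift := hhTD_shift hf a (hΩ a haK)
      obtain ⟨hT, hL⟩ := hhTD_add Metric.isOpen_ball hF2 hshift 1 w
      refine ⟨fun x => 1 * F x + w * f (x + a), by fun_prop, hT, fun x hx => ?_, fun x hx => ?_⟩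
      · rw [hL x hx, hh_lap_shift]
        have h1 := hF3 x hx
        have h2 := hsub _ (hΩ a haK x hx)
        positivity
      · have e1 := integral_inter_add_sdiff (μ := volume) (s := S) (measurableSet_ball (x := a) (ε := δ)) (hintf x).integrableOn
        have e2 := integral_inter_add_sdiff (μ := volume) (s := S) (measurableSet_ball (x := a) (ε := δ)) hint.integrableOn
        rw [← e1, ← e2]
        have h3 := hF4 x hx
        have h4 : |w * f (x + a) - ∫ y in S ∩ Metric.ball a δ, f (x + y) * g y| ≤ τ * w := by
          have : w * f (x + a) - ∫ y in S ∩ Metric.ball a δ, f (x + y) * g y =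
              ∫ y in S ∩ Metric.ball a δ, (f (x + a) - f (x + y)) * g y := by
            rw [hw, ← integral_mul_const, ← integral_sub (hint.integrableOn.mul_const _) (hintf x).integrableOn]
            congr 1; ext y; ring
          rw [this, ← Real.norm_eq_abs, hw, ← integral_const_mul]
          refine norm_integral_le_of_norm_le (hint.integrableOn.const_mul _) ?_
          refine (ae_restrict_iff' (hSm.inter measurableSet_ball)).2 (Filter.Eventually.of_forall ?_)
          rintro y ⟨hyS, hya⟩
          rw [norm_mul, Real.norm_of_nonneg (hg0 y)]
          refine mul_le_mul_of_nonneg_right ?_ (hg0 y)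
          rw [← dist_eq_norm]
          refine hδf _ (hmem a haK x hx) _ (hmem y (hSK hyS) x hx) ?_
          rw [dist_add_left, dist_comm]
          exact (Metric.mem_ball.1 hya).le
        rw [abs_le] at h3 h4 ⊢
        constructor <;> linarith
  obtain ⟨F, h1, h2, h3, h4⟩ := main htf.toFinset (by simpa using htK) K hKc.measurableSet subset_rfl
    (by simpa using hcov)
  refine ⟨F, h1, h2, h3, fun x hx => ?_⟩
  have h5 := h4 x hx
  rw [setIntegral_eq_integral_of_forall_compl_eq_zero, setIntegral_eq_integral_of_forall_compl_eq_zero] at h5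
  · exact h5
  · intro y hy; exact image_eq_zero_of_notMem_tsupport hy
  · intro y hy; rw [image_eq_zero_of_notMem_tsupport hy, mul_zero]

lemma hh_fderiv_neg {n : ℕ} {H : HHE n → ℝ} (hH : Differentiable ℝ H) (y e : HHE n) :
    fderiv ℝ (fun y => H (-y)) y e = - fderiv ℝ H (-y) e := by
  have h1 : HasFDerivAt (fun y : HHE n => -y) (-ContinuousLinearMap.id ℝ (HHE n)) y :=
    (hasFDerivAt_id y).neg
  have h2 : HasFDerivAt (fun y => H (-y)) ((fderiv ℝ H (-y)).comp (-ContinuousLinearMap.id ℝ (HHE n))) y :=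
    (hH (-y)).hasFDerivAt.comp y h1
  rw [h2.fderiv]
  simp

lemma hh_lap_neg {n : ℕ} {g : HHE n → ℝ} (hg : ContDiff ℝ 2 g) (x : HHE n) :
    laplacian (fun y => g (-y)) x = laplacian g (-x) := by
  unfold laplacian
  refine Finset.sum_congr rfl fun i _ => ?_
  simp_rw [hh_fderiv_neg (hg.differentiable (by norm_num))]
  have h1 : ContDiff ℝ 1 (fun y => fderiv ℝ g y (EuclideanSpace.single i (1:ℝ))) :=
    (hg.fderiv_right (m := 1) (by norm_num)).clm_apply contDiff_const
  have h2 := hh_fderiv_neg (H := fun y => - fderiv ℝ g y (EuclideanSpace.single i (1:ℝ)))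
    (h1.differentiable (by norm_num)).neg x (EuclideanSpace.single i (1:ℝ))
  rw [h2]
  have h3 : HasFDerivAt (fun y => - fderiv ℝ g y (EuclideanSpace.single i (1:ℝ))) _ (-x) :=
    (h1.differentiable (by norm_num) (-x)).hasFDerivAt.neg
  rw [h3.fderiv]
  simp

lemma hhTD_of_contDiff {n : ℕ} {g : HHE n → ℝ} (hg : ContDiff ℝ 2 g) (U : Set (HHE n)) : hhTD g U :=
  ⟨fun x _ => hg.differentiable (by norm_num) x, fun x _ =>
    (hg.fderiv_right (m := 1) (by norm_num)).differentiable (by norm_num) x⟩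

lemma hh_lap_sq {n : ℕ} (x : HHE n) : laplacian (fun y : HHE n => ‖y‖ ^ 2) x = 2 * n := by
  unfold laplacian
  have h1 : ∀ i : Fin n, fderiv ℝ (fun y => fderiv ℝ (fun y : HHE n => ‖y‖ ^ 2) y
      (EuclideanSpace.single i (1:ℝ))) x (EuclideanSpace.single i (1:ℝ)) = 2 := by
    intro i
    have h2 : (fun y => fderiv ℝ (fun y : HHE n => ‖y‖ ^ 2) y (EuclideanSpace.single i (1:ℝ))) =
        fun y => ((2:ℝ) • innerSL ℝ (EuclideanSpace.single i (1:ℝ) : HHE n)) y := by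
      ext y
      rw [(hasStrictFDerivAt_norm_sq y).hasFDerivAt.fderiv]
      simp [real_inner_comm]
    rw [h2, ContinuousLinearMap.fderiv]
    simp
  rw [Finset.sum_congr rfl fun i _ => h1 i]
  simp [mul_comm]

lemma hh_weak {n : ℕ} {Ω : Set (HHE n)} (hΩ : IsOpen Ω) {f : HHE n → ℝ} (hfc : Continuous f)
    (hf : hhTD f Ω) (hsub : ∀ x ∈ Ω, 0 ≤ laplacian f x) {g : HHE n → ℝ} (hg : ContDiff ℝ 2 g)
    (hgs : HasCompactSupport g) (hg0 : ∀ x, 0 ≤ g x) (hgΩ : tsupport g ⊆ Ω) :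
    0 ≤ ∫ x, f x * laplacian g x := by
  by_contra! hneg
  set G : HHE n → ℝ := fun y => g (-y) with hGdef
  have hG : ContDiff ℝ 2 G := hg.comp contDiff_neg
  have hGs : HasCompactSupport G := hgs.comp_homeomorph (Homeomorph.neg _)
  set h : HHE n → ℝ := fun x => ∫ z, f z * G (x - z) with hh
  have hC2 : ContDiff ℝ 2 h := by
    have h2 : h = convolution f G (ContinuousLinearMap.mul ℝ ℝ) volume := by
      ext x; simp [convolution_def, hh]
    rw [h2]
    exact hGs.contDiff_convolution_right _ hfc.locallyIntegrable hG
  have hform : ∀ x, h x = ∫ y, f (x + y) * g y := by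
    intro x
    have h1 := integral_add_left_eq_self (μ := volume) (fun z => f z * G (x - z)) x
    simp only [hh]
    rw [← h1]
    simp [hGdef]
  have hlap0 : laplacian h 0 = ∫ x, f x * laplacian g x := by
    rw [hh, hh_conv_lap hfc hG hGs]
    simp_rw [hGdef, hh_lap_neg hg]
    simp
  set c : ℝ := -(laplacian h 0) / 2 with hc
  have hc0 : 0 < c := by rw [hc, hlap0]; linarith
  have hev : ∀ᶠ x in nhds 0, laplacian h x < -c :=
    (hh_lap_cont hC2).continuousAt.eventually_lt continuousAt_const (by rw [hc]; linarith)
  obtain ⟨ρ1, hρ1, hb1⟩ := Metric.eventually_nhds_iff_ball.1 hev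
  obtain ⟨ρ2, hρ2, hb2⟩ := hgs.isCompact.exists_thickening_subset_open hΩ hgΩ
  set ρ := min ρ1 ρ2 with hρ
  have hρ0 : 0 < ρ := lt_min hρ1 hρ2
  have hΩ' : ∀ y ∈ tsupport g, ∀ x ∈ Metric.ball (0 : HHE n) ρ, x + y ∈ Ω := by
    intro y hy x hx
    apply hb2
    rw [Metric.mem_thickening_iff]
    refine ⟨y, hy, ?_⟩
    rw [mem_ball_zero_iff] at hx
    simpa [dist_eq_norm] using hx.trans_le (min_le_right _ _)
  set ρ' := ρ / 2 with hρ'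
  have hρ'0 : 0 < ρ' := by positivity
  set κ : ℝ := c / (2 * n + 1) with hκ
  have hκ0 : 0 < κ := by positivity
  have hκc : κ * (2 * n) < c := by
    have : κ * (2 * n + 1) = c := by rw [hκ]; field_simp
    linarith
  set I := ∫ y, g y with hI
  have hI0 : 0 ≤ I := integral_nonneg hg0
  set τ : ℝ := κ * ρ' ^ 2 / (4 * (I + 1)) with hτ
  have hτ0 : 0 < τ := by positivity
  have hτI : 2 * (τ * I) < κ * ρ' ^ 2 := by
    have : τ * (4 * (I + 1)) = κ * ρ' ^ 2 := by rw [hτ]; field_simp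
    nlinarith
  obtain ⟨F, hF1, hF2, hF3, hF4⟩ := hh_approx hfc hf hsub hg.continuous hgs hg0 ρ hΩ' τ hτ0
  obtain ⟨hT1, hL1⟩ := hhTD_add Metric.isOpen_ball hF2 (hhTD_of_contDiff hC2 (Metric.ball 0 ρ)) 1 (-1)
  obtain ⟨hT, hL⟩ := hhTD_add Metric.isOpen_ball hT1
    (hhTD_of_contDiff (contDiff_norm_sq ℝ (E := HHE n) (n := 2)) (Metric.ball 0 ρ)) 1 (-κ)
  set Φ : HHE n → ℝ := fun x => 1 * (1 * F x + -1 * h x) + -κ * ‖x‖ ^ 2 with hΦ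
  have hΦc : Continuous Φ := by have := hC2.continuous; simp only [hΦ]; fun_prop
  obtain ⟨p, hp, hmax⟩ := (isCompact_closedBall (0 : HHE n) ρ').exists_isMaxOn
    ⟨0, by simp [hρ'0.le]⟩ hΦc.continuousOn
  have hpρ : p ∈ Metric.ball (0 : HHE n) ρ := by
    rw [mem_closedBall_zero_iff] at hp; rw [mem_ball_zero_iff]; linarith
  rcases lt_or_ge ‖p‖ ρ' with hlt | hge
  · have hloc : IsLocalMax Φ p := hmax.isLocalMax
      (Filter.mem_of_superset (Metric.isOpen_ball.mem_nhds (by simpa using hlt)) Metric.ball_subset_closedBall)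
    have h1 := hh_lap_max hloc (by
      filter_upwards [Metric.isOpen_ball.mem_nhds hpρ] with y hy using hT.1 y hy) (hT.2 p hpρ)
    rw [hL p hpρ, hL1 p hpρ, hh_lap_sq] at h1
    have h2 := hF3 p hpρ
    have h3 := hb1 p (Metric.ball_subset_ball (min_le_left _ _) hpρ)
    linarith
  · have h0 := hmax (show (0 : HHE n) ∈ Metric.closedBall 0 ρ' by simp [hρ'0.le])
    have h1 := hF4 0 (by simpa using hρ0)
    have h2 := hF4 p hpρ
    rw [← hform, abs_le] at h1 h2
    have h3 : ρ' ^ 2 ≤ ‖p‖ ^ 2 := by gcongr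
    have h4 := mul_le_mul_of_nonneg_left h3 hκ0.le
    have h5 : Φ 0 = F 0 - h 0 := by simp [hΦ]; ring
    have h6 : Φ p = F p - h p - κ * ‖p‖ ^ 2 := by simp [hΦ]; ring
    have h7 : Φ 0 ≤ Φ p := h0
    rw [h5, h6] at h7
    linarith

noncomputable def hhS {n : ℕ} {ι : Type} [Fintype ι] (ν : ι → HHE n) (h : ι → ℝ) (β : ℝ) (x : HHE n) : ℝ :=
  ∑ i, Real.exp (β * (inner ℝ (ν i) x - h i))

noncomputable def hhV {n : ℕ} {ι : Type} [Fintype ι] (ν : ι → HHE n) (h : ι → ℝ) (β : ℝ) (x : HHE n) : HHE n :=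
  ∑ i, Real.exp (β * (inner ℝ (ν i) x - h i)) • ν i

noncomputable def hhD {n : ℕ} {ι : Type} [Fintype ι] (ν : ι → HHE n) (h : ι → ℝ) (β : ℝ) (x : HHE n) : ℝ :=
  -(Real.log (hhS ν h β x) / β)

noncomputable def hhq {n : ℕ} {ι : Type} [Fintype ι] (ν : ι → HHE n) (h : ι → ℝ) (β : ℝ) (x : HHE n) : ℝ :=
  ‖hhV ν h β x‖ ^ 2 / hhS ν h β x ^ 2

lemma hhS_pos {n : ℕ} {ι : Type} [Fintype ι] [Nonempty ι] (ν : ι → HHE n) (h : ι → ℝ) (β : ℝ) (x : HHE n) :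
    0 < hhS ν h β x := Finset.sum_pos (fun i _ => Real.exp_pos _) Finset.univ_nonempty

lemma hhS_contDiff {n : ℕ} {ι : Type} [Fintype ι] (ν : ι → HHE n) (h : ι → ℝ) (β : ℝ) :
    ContDiff ℝ 2 (hhS ν h β) := by
  unfold hhS
  exact ContDiff.sum fun i _ => (contDiff_const.mul ((innerSL ℝ (ν i)).contDiff.sub contDiff_const)).exp

lemma hhV_cont {n : ℕ} {ι : Type} [Fintype ι] (ν : ι → HHE n) (h : ι → ℝ) (β : ℝ) :
    Continuous (hhV ν h β) := by
  unfold hhV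
  fun_prop

lemma hhD_contDiff {n : ℕ} {ι : Type} [Fintype ι] [Nonempty ι] (ν : ι → HHE n) (h : ι → ℝ) (β : ℝ) :
    ContDiff ℝ 2 (hhD ν h β) := by
  unfold hhD
  exact (((hhS_contDiff ν h β).log fun x => (hhS_pos ν h β x).ne').div_const β).neg

lemma hhq_cont {n : ℕ} {ι : Type} [Fintype ι] [Nonempty ι] (ν : ι → HHE n) (h : ι → ℝ) (β : ℝ) :
    Continuous (hhq ν h β) := by
  unfold hhq
  exact ((hhV_cont ν h β).norm.pow 2).div ((hhS_contDiff ν h β).continuous.pow 2)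
    fun x => (pow_pos (hhS_pos ν h β x) 2).ne'

lemma hhq_nonneg {n : ℕ} {ι : Type} [Fintype ι] (ν : ι → HHE n) (h : ι → ℝ) (β : ℝ) (x : HHE n) :
    0 ≤ hhq ν h β x := by
  unfold hhq; positivity

lemma hhq_le_one {n : ℕ} {ι : Type} [Fintype ι] [Nonempty ι] (ν : ι → HHE n) (h : ι → ℝ)
    (hν : ∀ i, ‖ν i‖ = 1) (β : ℝ) (x : HHE n) : hhq ν h β x ≤ 1 := by
  have hS := hhS_pos ν h β x
  unfold hhq
  rw [div_le_one (by positivity)]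
  have : ‖hhV ν h β x‖ ≤ hhS ν h β x := by
    unfold hhV hhS
    refine (norm_sum_le _ _).trans (Finset.sum_le_sum fun i _ => ?_)
    rw [norm_smul, hν, mul_one, Real.norm_of_nonneg (Real.exp_pos _).le]
  gcongr

lemma hhD_le {n : ℕ} {ι : Type} [Fintype ι] [Nonempty ι] (ν : ι → HHE n) (h : ι → ℝ) {β : ℝ} (hβ : 0 < β)
    (x : HHE n) (i : ι) : hhD ν h β x ≤ h i - inner ℝ (ν i) x := by
  have h1 : β * (inner ℝ (ν i) x - h i) ≤ Real.log (hhS ν h β x) := by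
    rw [Real.le_log_iff_exp_le (hhS_pos ν h β x)]
    exact Finset.single_le_sum (f := fun i => Real.exp (β * (inner ℝ (ν i) x - h i)))
      (fun i _ => (Real.exp_pos _).le) (Finset.mem_univ i)
  unfold hhD
  have h2 : inner ℝ (ν i) x - h i ≤ Real.log (hhS ν h β x) / β := by
    rw [le_div_iff₀ hβ]; linarith
  linarith

lemma hh_sum_sq {n : ℕ} (v : HHE n) : ∑ i : Fin n, (inner ℝ v (EuclideanSpace.single i (1:ℝ)) : ℝ) ^ 2 = ‖v‖ ^ 2 := by
  rw [EuclideanSpace.norm_sq_eq]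
  refine Finset.sum_congr rfl fun i _ => ?_
  simp [EuclideanSpace.inner_single_right]

lemma hh_exp_deriv {n : ℕ} {ι : Type} [Fintype ι] (ν : ι → HHE n) (h : ι → ℝ) (β : ℝ) (x : HHE n) (a : ι → ℝ) :
    HasFDerivAt (fun x => ∑ i, Real.exp (β * (inner ℝ (ν i) x - h i)) * a i)
      (∑ i, (Real.exp (β * (inner ℝ (ν i) x - h i)) * a i * β) • innerSL ℝ (ν i)) x := by
  refine HasFDerivAt.fun_sum fun i _ => ?_
  have h1 : HasFDerivAt (fun x : HHE n => (inner ℝ (ν i) x : ℝ)) (innerSL ℝ (ν i)) x :=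
    (innerSL ℝ (ν i)).hasFDerivAt
  have h2 := (((h1.sub_const (h i)).const_mul β).exp).mul_const (a i)
  refine h2.congr_fderiv ?_
  simp only [smul_smul]
  congr 1
  ring

lemma hhS_deriv {n : ℕ} {ι : Type} [Fintype ι] (ν : ι → HHE n) (h : ι → ℝ) (β : ℝ) (x : HHE n) :
    HasFDerivAt (hhS ν h β) (β • innerSL ℝ (hhV ν h β x)) x := by
  have h1 := hh_exp_deriv ν h β x (fun _ => 1)
  simp only [mul_one] at h1
  refine HasFDerivAt.congr_fderiv (f := hhS ν h β) h1 ?_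
  simp only [hhV, map_sum, Finset.smul_sum, map_smul, smul_smul]
  refine Finset.sum_congr rfl fun i _ => ?_
  rw [mul_comm]

lemma hhD_deriv {n : ℕ} {ι : Type} [Fintype ι] [Nonempty ι] (ν : ι → HHE n) (h : ι → ℝ) {β : ℝ} (hβ : 0 < β)
    (x : HHE n) : HasFDerivAt (hhD ν h β) (-(hhS ν h β x)⁻¹ • innerSL ℝ (hhV ν h β x)) x := by
  have h1 : HasFDerivAt (hhD ν h β) _ x := (((hhS_deriv ν h β x).log (hhS_pos ν h β x).ne').mul_const β⁻¹).neg
  refine h1.congr_fderiv ?_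
  simp only [smul_smul, ← neg_smul]
  congr 1
  field_simp

lemma hh_soft_lap {n : ℕ} {ι : Type} [Fintype ι] [Nonempty ι] (ν : ι → HHE n) (h : ι → ℝ)
    (hν : ∀ i, ‖ν i‖ = 1) {β : ℝ} (hβ : 0 < β) {ψ ψ1 k : ℝ → ℝ} (h1 : ∀ t, HasDerivAt ψ (ψ1 t) t)
    (h2 : ∀ t, HasDerivAt ψ1 (k t) t) (x : HHE n) :
    laplacian (fun y => ψ (hhD ν h β y)) x =
      k (hhD ν h β x) * hhq ν h β x - β * ψ1 (hhD ν h β x) * (1 - hhq ν h β x) := by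
  have hS := hhS_pos ν h β
  set D := hhD ν h β with hD
  have hterm : ∀ e : HHE n, fderiv ℝ (fun y => fderiv ℝ (fun y => ψ (D y)) y e) x e =
      k (D x) * ((inner ℝ (hhV ν h β x) e) ^ 2 / hhS ν h β x ^ 2) -
      β * ψ1 (D x) * ((∑ i, Real.exp (β * (inner ℝ (ν i) x - h i)) * (inner ℝ (ν i) e) ^ 2) / hhS ν h β x
        - (inner ℝ (hhV ν h β x) e) ^ 2 / hhS ν h β x ^ 2) := by
    intro e
    have e1 : (fun y => fderiv ℝ (fun y => ψ (D y)) y e) = fun y =>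
        ψ1 (D y) * (-((∑ i, Real.exp (β * (inner ℝ (ν i) y - h i)) * inner ℝ (ν i) e) * (hhS ν h β y)⁻¹)) := by
      ext y
      have h3 : HasFDerivAt (fun y => ψ (D y)) _ y := (h1 (D y)).comp_hasFDerivAt y (hhD_deriv ν h hβ y)
      rw [h3.fderiv]
      have h8 : ∑ i, Real.exp (β * (inner ℝ (ν i) y - h i)) * inner ℝ (ν i) e = inner ℝ (hhV ν h β y) e := by
        simp [hhV, sum_inner, inner_smul_left]
      rw [h8]
      simp only [FunLike.coe_smul, Pi.smul_apply, innerSL_apply_apply, smul_eq_mul]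
      ring
    rw [e1]
    have h4 : HasFDerivAt (fun y => ψ1 (D y)) _ x := (h2 (D x)).comp_hasFDerivAt x (hhD_deriv ν h hβ x)
    have h5 : HasFDerivAt (fun y => (hhS ν h β y)⁻¹) _ x :=
      (hasDerivAt_inv (hS x).ne').comp_hasFDerivAt x (hhS_deriv ν h β x)
    have h6 := h4.mul ((hh_exp_deriv ν h β x (fun i => inner ℝ (ν i) e)).mul h5).neg
    have h7 : HasFDerivAt (fun y =>
        ψ1 (D y) * (-((∑ i, Real.exp (β * (inner ℝ (ν i) y - h i)) * inner ℝ (ν i) e) * (hhS ν h β y)⁻¹))) _ x := h6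
    rw [h7.fderiv]
    have h8 : ∑ i, Real.exp (β * (inner ℝ (ν i) x - h i)) * inner ℝ (ν i) e = inner ℝ (hhV ν h β x) e := by
      simp [hhV, sum_inner, inner_smul_left]
    rw [h8]
    have h9 : (∑ i, (Real.exp (β * (inner ℝ (ν i) x - h i)) * inner ℝ (ν i) e * β) • innerSL ℝ (ν i)) e
        = β * ∑ i, Real.exp (β * (inner ℝ (ν i) x - h i)) * (inner ℝ (ν i) e) ^ 2 := by
      simp [Finset.mul_sum]
      refine Finset.sum_congr rfl fun i _ => ?_
      ring
    simp only [_root_.add_apply, _root_.smul_apply, _root_.neg_apply, Pi.mul_apply, Pi.neg_apply, h8, h9,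
      innerSL_apply_apply, smul_eq_mul]
    have := (hS x).ne'
    field_simp
    ring
  unfold laplacian
  rw [Finset.sum_congr rfl fun i _ => hterm _, Finset.sum_sub_distrib, ← Finset.mul_sum, ← Finset.mul_sum,
    Finset.sum_sub_distrib, ← Finset.sum_div, ← Finset.sum_div, hh_sum_sq, Finset.sum_comm]
  simp_rw [← Finset.mul_sum, hh_sum_sq, hν]
  have h10 : ∑ i, Real.exp (β * (inner ℝ (ν i) x - h i)) * 1 ^ 2 = hhS ν h β x := by simp [hhS]
  rw [h10, div_self (hS x).ne']
  rfl

lemma hh_soft {n : ℕ} {ι : Type} [Fintype ι] [Nonempty ι] (ν : ι → HHE n) (h : ι → ℝ)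
    (hν : ∀ i, ‖ν i‖ = 1) {Ω : Set (HHE n)} (hΩ : IsOpen Ω) {f : HHE n → ℝ} (hfc : Continuous f)
    (hf : hhTD f Ω) (hsub : ∀ x ∈ Ω, 0 ≤ laplacian f x) (hf0 : ∀ x, 0 ≤ f x)
    (hPΩ : hhP ν h ⊆ Ω) (hb : Bornology.IsBounded (hhP ν h)) (r : ℝ)
    (hr : ∀ x ∈ hhP ν h, ∃ i, h i - inner ℝ (ν i) x ≤ r) {k : ℝ → ℝ} (hk : Continuous k) {δ : ℝ} (hδ : 0 < δ)
    (hkδ : ∀ t, t ≤ δ → k t = 0) (hki : ∀ t, 0 ≤ t → t ≤ r → 0 ≤ ∫ s in (0:ℝ)..t, k s)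
    {β : ℝ} (hβ : 0 < β) : 0 ≤ ∫ x, f x * (k (hhD ν h β x) * hhq ν h β x) := by
  set ψ1 : ℝ → ℝ := fun t => ∫ s in (0:ℝ)..t, k s with hψ1
  set ψ : ℝ → ℝ := fun t => ∫ s in (0:ℝ)..t, ψ1 s with hψ
  have d1 : ∀ t, HasDerivAt ψ1 (k t) t := fun t => (hk.integral_hasStrictDerivAt 0 t).hasDerivAt
  have hψ1c : Continuous ψ1 := continuous_iff_continuousAt.2 fun t => (d1 t).continuousAt
  have d2 : ∀ t, HasDerivAt ψ (ψ1 t) t := fun t => (hψ1c.integral_hasStrictDerivAt 0 t).hasDerivAt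
  have hψ2 : ContDiff ℝ 2 ψ := by
    have e1 : deriv ψ = ψ1 := funext fun t => (d2 t).deriv
    have e2 : deriv ψ1 = k := funext fun t => (d1 t).deriv
    rw [show (2 : WithTop ℕ∞) = 1 + 1 by norm_num, contDiff_succ_iff_deriv]
    refine ⟨fun t => (d2 t).differentiableAt, by simp, ?_⟩
    rw [e1, contDiff_one_iff_deriv]
    exact ⟨fun t => (d1 t).differentiableAt, by rwa [e2]⟩
  have z1 : ∀ t, t ≤ δ → ψ1 t = 0 := by
    intro t ht
    refine intervalIntegral.integral_zero_ae (Filter.Eventually.of_forall fun s hs => hkδ s ?_)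
    rcases Set.mem_uIoc.1 hs with h | h
    · linarith [h.2]
    · linarith [h.2]
  have z2 : ∀ t, t ≤ δ → ψ t = 0 := by
    intro t ht
    refine intervalIntegral.integral_zero_ae (Filter.Eventually.of_forall fun s hs => z1 s ?_)
    rcases Set.mem_uIoc.1 hs with h | h
    · linarith [h.2]
    · linarith [h.2]
  have p1 : ∀ t, t ≤ r → 0 ≤ ψ1 t := by
    intro t ht
    rcases le_total t 0 with h0 | h0
    · rw [z1 t (by linarith)]
    · exact hki t h0 ht
  have p2 : ∀ t, t ≤ r → 0 ≤ ψ t := by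
    intro t ht
    rcases le_total t 0 with h0 | h0
    · rw [z2 t (by linarith)]
    · exact intervalIntegral.integral_nonneg h0 fun s hs => p1 s (hs.2.trans ht)
  set D := hhD ν h β with hD
  have hDc : Continuous D := (hhD_contDiff ν h β).continuous
  have hDP : ∀ x, 0 ≤ D x → x ∈ hhP ν h := by
    intro x hx i
    have := hhD_le ν h hβ x i
    linarith
  have hpos : 0 ≤ r ∨ ∀ x, D x < 0 := by
    by_contra! hcon
    obtain ⟨h1, x, hx⟩ := hcon
    obtain ⟨i, hi⟩ := hr x (hDP x hx)
    have := hhD_le ν h hβ x i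
    linarith
  have hDz : ∀ x, D x ≤ r ∨ D x < 0 := by
    intro x
    by_cases hx : 0 ≤ D x
    · obtain ⟨i, hi⟩ := hr x (hDP x hx)
      have := hhD_le ν h hβ x i
      left; linarith
    · right; linarith
  have hclosed : IsClosed {x | δ ≤ D x} := isClosed_le continuous_const hDc
  have hsubP : {x | δ ≤ D x} ⊆ hhP ν h := fun x hx => hDP x (hδ.le.trans hx)
  have hcomp : IsCompact {x | δ ≤ D x} := Metric.isCompact_of_isClosed_isBounded hclosed (hb.subset hsubP)
  have hts : tsupport (fun x => ψ (D x)) ⊆ {x | δ ≤ D x} := by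
    refine closure_minimal (fun x hx => ?_) hclosed
    by_contra hcon
    exact hx (z2 _ (not_le.1 hcon).le)
  have hg2 : ContDiff ℝ 2 (fun x => ψ (D x)) := hψ2.comp (hhD_contDiff ν h β)
  have hgs : HasCompactSupport (fun x => ψ (D x)) := hcomp.of_isClosed_subset (isClosed_tsupport _) hts
  have hg0 : ∀ x, 0 ≤ ψ (D x) := by
    intro x
    rcases hDz x with h1 | h1
    · exact p2 _ h1
    · rw [z2 _ (by linarith)]
  have hw := hh_weak hΩ hfc hf hsub hg2 hgs hg0 (hts.trans (hsubP.trans hPΩ))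
  refine hw.trans (integral_mono ?_ ?_ fun x => ?_)
  · exact (hfc.mul (hh_lap_cont hg2)).integrable_of_hasCompactSupport (hh_lap_supp hgs).mul_left
  · have hkc : HasCompactSupport (fun x => k (D x)) := by
      refine hcomp.of_isClosed_subset (isClosed_tsupport _) (closure_minimal (fun x hx => ?_) hclosed)
      by_contra hcon
      exact hx (hkδ _ (not_le.1 hcon).le)
    exact (hfc.mul ((hk.comp hDc).mul (hhq_cont ν h β))).integrable_of_hasCompactSupport
      (HasCompactSupport.mul_left (HasCompactSupport.mul_right hkc))
  · refine mul_le_mul_of_nonneg_left ?_ (hf0 x)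
    rw [hh_soft_lap ν h hν hβ d2 d1 x]
    have h1 : 0 ≤ ψ1 (D x) := by
      rcases hDz x with h1 | h1
      · exact p1 _ h1
      · rw [z1 _ (by linarith)]
    have h2 : 0 ≤ 1 - hhq ν h β x := sub_nonneg.2 (hhq_le_one ν h hν β x)
    have h3 : 0 ≤ β * ψ1 (D x) * (1 - hhq ν h β x) := by positivity
    linarith

noncomputable def hhd {n : ℕ} {ι : Type} [Fintype ι] [Nonempty ι] (ν : ι → HHE n) (h : ι → ℝ) (x : HHE n) : ℝ :=
  Finset.univ.inf' Finset.univ_nonempty fun i => h i - inner ℝ (ν i) x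

lemma hhd_cont {n : ℕ} {ι : Type} [Fintype ι] [Nonempty ι] (ν : ι → HHE n) (h : ι → ℝ) :
    Continuous (hhd ν h) := by
  unfold hhd
  exact Continuous.finset_inf'_apply _ fun i _ => by fun_prop

lemma hhd_le {n : ℕ} {ι : Type} [Fintype ι] [Nonempty ι] (ν : ι → HHE n) (h : ι → ℝ) (x : HHE n) (i : ι) :
    hhd ν h x ≤ h i - inner ℝ (ν i) x := Finset.inf'_le _ (Finset.mem_univ i)

lemma hhd_exists {n : ℕ} {ι : Type} [Fintype ι] [Nonempty ι] (ν : ι → HHE n) (h : ι → ℝ) (x : HHE n) :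
    ∃ i, hhd ν h x = h i - inner ℝ (ν i) x := by
  obtain ⟨i, _, hi⟩ := Finset.exists_mem_eq_inf' (Finset.univ_nonempty (α := ι)) fun i => h i - inner ℝ (ν i) x
  exact ⟨i, hi⟩

lemma hhd_mem {n : ℕ} {ι : Type} [Fintype ι] [Nonempty ι] (ν : ι → HHE n) (h : ι → ℝ) (x : HHE n) :
    x ∈ hhP ν h ↔ 0 ≤ hhd ν h x := by
  constructor
  · intro hx
    obtain ⟨i, hi⟩ := hhd_exists ν h x
    have := hx i
    linarith
  · intro hx i
    have := hhd_le ν h x i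
    linarith

lemma hh_soft_tendsto {n : ℕ} {ι : Type} [Fintype ι] [Nonempty ι] (ν : ι → HHE n) (h : ι → ℝ)
    (hν : ∀ i, ‖ν i‖ = 1) (x : HHE n)
    (hx : ∀ i j, i ≠ j → h i - inner ℝ (ν i) x ≠ h j - inner ℝ (ν j) x) :
    Filter.Tendsto (fun β => hhD ν h β x) Filter.atTop (nhds (hhd ν h x)) ∧
    Filter.Tendsto (fun β => hhq ν h β x) Filter.atTop (nhds 1) := by
  classical
  obtain ⟨o, ho⟩ := hhd_exists ν h x
  set d := hhd ν h x with hd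
  set w : ι → ℝ → ℝ := fun i β => Real.exp (-(β * (h i - inner ℝ (ν i) x - d))) with hw
  have hwt : ∀ i, Filter.Tendsto (w i) Filter.atTop (nhds (if i = o then 1 else 0)) := by
    intro i
    by_cases hio : i = o
    · subst hio
      simp [hw, ho]
    · rw [if_neg hio]
      have hpos : 0 < h i - inner ℝ (ν i) x - d := by
        have h1 := hhd_le ν h x i
        have h2 := hx i o hio
        rw [← ho] at h2
        have := lt_of_le_of_ne h1 h2.symm
        linarith
      exact Real.tendsto_exp_neg_atTop_nhds_zero.comp (Filter.tendsto_id.atTop_mul_const hpos)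
  have hfac : ∀ i β, Real.exp (β * (inner ℝ (ν i) x - h i)) = Real.exp (-(β * d)) * w i β := by
    intro i β
    rw [hw, ← Real.exp_add]; congr 1; ring
  have hSt : Filter.Tendsto (fun β => ∑ i, w i β) Filter.atTop (nhds 1) := by
    have := tendsto_finsetSum Finset.univ (fun i _ => hwt i)
    simpa using this
  have hVt : Filter.Tendsto (fun β => ∑ i, w i β • ν i) Filter.atTop (nhds (ν o)) := by
    have := tendsto_finsetSum Finset.univ (fun i _ => (hwt i).smul_const (ν i))
    simpa using this
  have hS : ∀ β, hhS ν h β x = Real.exp (-(β * d)) * ∑ i, w i β := by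
    intro β; simp only [hhS, hfac, Finset.mul_sum]
  have hV : ∀ β, hhV ν h β x = Real.exp (-(β * d)) • ∑ i, w i β • ν i := by
    intro β; simp only [hhV, hfac, Finset.smul_sum, smul_smul]
  have hwpos : ∀ β, 0 < ∑ i, w i β := fun β =>
    Finset.sum_pos (fun _ _ => Real.exp_pos _) Finset.univ_nonempty
  constructor
  · have h1 : Filter.Tendsto (fun β : ℝ => d - Real.log (∑ i, w i β) * β⁻¹) Filter.atTop (nhds (d - Real.log 1 * 0)) :=
      ((hSt.log one_ne_zero).mul tendsto_inv_atTop_zero).const_sub d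
    rw [mul_zero, sub_zero] at h1
    refine h1.congr' ?_
    filter_upwards [Filter.eventually_gt_atTop 0] with β hβ
    rw [hhD, hS, Real.log_mul (Real.exp_pos _).ne' (hwpos β).ne', Real.log_exp]
    field_simp
    ring
  · have h1 := ((hVt.norm.pow 2).div (hSt.pow 2) (by norm_num))
    rw [hν] at h1
    norm_num at h1
    refine h1.congr fun β => ?_
    have := hwpos β
    simp only [Pi.div_apply]
    rw [hhq, hS, hV, norm_smul, Real.norm_of_nonneg (Real.exp_pos _).le]
    field_simp

lemma hh_softlim {n : ℕ} {ι : Type} [Fintype ι] [Nonempty ι] (ν : ι → HHE n) (h : ι → ℝ)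
    (hν : ∀ i, ‖ν i‖ = 1) (hinj : Function.Injective ν) {Ω : Set (HHE n)} (hΩ : IsOpen Ω)
    {f : HHE n → ℝ} (hfc : Continuous f)
    (hf : hhTD f Ω) (hsub : ∀ x ∈ Ω, 0 ≤ laplacian f x) (hf0 : ∀ x, 0 ≤ f x)
    (hPΩ : hhP ν h ⊆ Ω) (hb : Bornology.IsBounded (hhP ν h)) (r : ℝ)
    (hr : ∀ x ∈ hhP ν h, ∃ i, h i - inner ℝ (ν i) x ≤ r) {k : ℝ → ℝ} (hk : Continuous k) {δ : ℝ} (hδ : 0 < δ)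
    (hkδ : ∀ t, t ≤ δ → k t = 0) (hki : ∀ t, 0 ≤ t → t ≤ r → 0 ≤ ∫ s in (0:ℝ)..t, k s)
    {M : ℝ} (hM : ∀ t, |k t| ≤ M) : 0 ≤ ∫ x, f x * k (hhd ν h x) := by
  have hcomp : IsCompact (hhP ν h) := Metric.isCompact_of_isClosed_isBounded (hhP_closed ν h) hb
  have hM0 : 0 ≤ M := (abs_nonneg _).trans (hM 0)
  have hae : ∀ᵐ x : HHE n, ∀ i j, i ≠ j → h i - inner ℝ (ν i) x ≠ h j - inner ℝ (ν j) x := by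
    rw [ae_all_iff]; intro i
    rw [ae_all_iff]; intro j
    by_cases hij : i = j
    · simp [hij]
    · have h1 := hh_hyper_null (ν i - ν j) (sub_ne_zero.2 fun e => hij (hinj e)) (h i - h j)
      refine (measure_eq_zero_iff_ae_notMem.1 h1).mono fun x hx _ he => hx ?_
      simp only [Set.mem_ofPred_eq, inner_sub_left]
      linarith
  have ht : Filter.Tendsto (fun β => ∫ x, f x * (k (hhD ν h β x) * hhq ν h β x)) Filter.atTop
      (nhds (∫ x, f x * k (hhd ν h x))) := by
    refine tendsto_integral_filter_of_dominated_convergence ((hhP ν h).indicator fun x => f x * M) ?_ ?_ ?_ ?_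
    · refine Filter.Eventually.of_forall fun β => ?_
      exact (hfc.mul ((hk.comp (hhD_contDiff ν h β).continuous).mul (hhq_cont ν h β))).aestronglyMeasurable
    · filter_upwards [Filter.eventually_gt_atTop 0] with β hβ
      refine Filter.Eventually.of_forall fun x => ?_
      by_cases hx : x ∈ hhP ν h
      · rw [Set.indicator_of_mem hx, norm_mul, Real.norm_of_nonneg (hf0 x)]
        refine mul_le_mul_of_nonneg_left ?_ (hf0 x)
        rw [norm_mul, Real.norm_eq_abs, Real.norm_of_nonneg (hhq_nonneg ν h β x)]
        calc _ ≤ M * 1 := mul_le_mul (hM _) (hhq_le_one ν h hν β x) (hhq_nonneg ν h β x) hM0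
          _ = M := mul_one M
      · rw [Set.indicator_of_notMem hx, hkδ]
        · simp
        · by_contra! hcon
          refine hx fun i => ?_
          have := hhD_le ν h hβ x i
          linarith
    · rw [integrable_indicator_iff hcomp.measurableSet]
      exact (hfc.mul continuous_const).continuousOn.integrableOn_compact hcomp
    · filter_upwards [hae] with x hx
      obtain ⟨t1, t2⟩ := hh_soft_tendsto ν h hν x hx
      have := (((hk.tendsto _).comp t1).mul t2).const_mul (f x)
      simpa using this
  refine ge_of_tendsto ht ?_
  filter_upwards [Filter.eventually_gt_atTop 0] with β hβ
  exact hh_soft ν h hν hΩ hfc hf hsub hf0 hPΩ hb r hr hk hδ hkδ hki hβ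

lemma hh_trap {r ε : ℝ} (hε : 0 < ε) (hr : 0 < r) : ∃ k : ℝ → ℝ, Continuous k ∧
    (∀ t, t ≤ ε / 30 → k t = 0) ∧ (∀ t, ε ≤ t → k t = -1) ∧ (∀ t, k t ≤ r / (0.9 * ε)) ∧ (∀ t, -1 ≤ k t) ∧
    ∀ t, 0 ≤ t → t ≤ r → 0 ≤ ∫ s in (0:ℝ)..t, k s := by
  set H : ℝ := r / (0.9 * ε) with hH
  have hH0 : 0 < H := by positivity
  have hHr : H * (0.9 * ε) = r := by rw [hH]; field_simp
  set δ := ε / 30 with hδ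
  have hδ0 : 0 < δ := by positivity
  set a : ℝ → ℝ := fun t => H * max 0 (min 1 ((t - δ) / δ)) with ha
  set b : ℝ → ℝ := fun t => max (-1) (H - (H + 1) / δ * (t - (ε - δ))) with hb
  have hkc : Continuous fun t => min (a t) (b t) := by simp only [ha, hb]; fun_prop
  have ha0 : ∀ t, 0 ≤ a t := fun t => mul_nonneg hH0.le (le_max_left _ _)
  have haH : ∀ t, a t ≤ H := fun t => by
    have : max 0 (min 1 ((t - δ) / δ)) ≤ 1 := max_le zero_le_one (min_le_left _ _)
    simp only [ha]; nlinarith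
  have hbH : ∀ t, t ≤ ε - δ → H ≤ b t := by
    intro t ht
    refine le_trans ?_ (le_max_right _ _)
    have : 0 ≤ (H + 1) / δ * ((ε - δ) - t) := mul_nonneg (by positivity) (by linarith)
    linarith
  have hkn : ∀ t, -1 ≤ min (a t) (b t) := fun t => le_min (by linarith [ha0 t]) (le_max_left _ _)
  have hk0 : ∀ t, t ≤ ε - δ → 0 ≤ min (a t) (b t) := fun t ht => le_min (ha0 t) (hH0.le.trans (hbH t ht))
  have hkH : ∀ t, 2 * δ ≤ t → t ≤ ε - δ → min (a t) (b t) = H := by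
    intro t h1 h2
    have : a t = H := by
      simp only [ha]
      have h3 : 1 ≤ (t - δ) / δ := by rw [le_div_iff₀ hδ0]; linarith
      rw [min_eq_left h3, max_eq_right zero_le_one, mul_one]
    rw [this, min_eq_left (hbH t h2)]
  refine ⟨fun t => min (a t) (b t), hkc, ?_, ?_, ?_, hkn, ?_⟩
  · intro t ht
    have : a t = 0 := by
      simp only [ha]
      have h3 : (t - δ) / δ ≤ 0 := div_nonpos_of_nonpos_of_nonneg (by linarith) hδ0.le
      rw [max_eq_left ((min_le_right _ _).trans h3), mul_zero]
    beta_reduce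
    rw [this, min_eq_left]
    exact hH0.le.trans (hbH t (by linarith))
  · intro t ht
    have : b t = -1 := by
      simp only [hb]
      refine max_eq_left ?_
      have h1 : (H + 1) / δ * δ = H + 1 := by field_simp
      have h2 : (H + 1) / δ * δ ≤ (H + 1) / δ * (t - (ε - δ)) :=
        mul_le_mul_of_nonneg_left (by linarith) (by positivity)
      linarith
    beta_reduce
    rw [this, min_eq_right]
    linarith [ha0 t]
  · exact fun t => (min_le_left _ _).trans (haH t)
  · intro t ht htr
    have hint : ∀ u v : ℝ, IntervalIntegrable (fun t => min (a t) (b t)) volume u v :=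
      fun u v => hkc.intervalIntegrable u v
    rcases le_total t (ε - δ) with h1 | h1
    · exact intervalIntegral.integral_nonneg ht fun s hs => hk0 s (hs.2.trans h1)
    · rw [← intervalIntegral.integral_add_adjacent_intervals (hint 0 (2 * δ)) (hint (2 * δ) t),
        ← intervalIntegral.integral_add_adjacent_intervals (hint (2 * δ) (ε - δ)) (hint (ε - δ) t)]
      have i1 : 0 ≤ ∫ s in (0:ℝ)..(2 * δ), min (a s) (b s) :=
        intervalIntegral.integral_nonneg (by linarith) fun s hs => hk0 s (hs.2.trans (by linarith))
      have i2 : ∫ s in (2 * δ)..(ε - δ), min (a s) (b s) = ∫ s in (2 * δ)..(ε - δ), H := by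
        refine intervalIntegral.integral_congr fun s hs => ?_
        rw [Set.uIcc_of_le (by linarith)] at hs
        exact hkH s hs.1 hs.2
      have i3 : ∫ s in (ε - δ)..t, (-1 : ℝ) ≤ ∫ s in (ε - δ)..t, min (a s) (b s) :=
        intervalIntegral.integral_mono_on h1 (by simp) (hint _ _) fun s _ => hkn s
      rw [i2]
      simp only [intervalIntegral.integral_const, smul_eq_mul] at i3 ⊢
      have : (ε - δ - 2 * δ) * H = r := by rw [← hHr, hδ]; ring
      linarith

lemma hh_band {n : ℕ} {ι : Type} [Fintype ι] [Nonempty ι] (ν : ι → HHE n) (h : ι → ℝ)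
    (hν : ∀ i, ‖ν i‖ = 1) (hinj : Function.Injective ν) {Ω : Set (HHE n)} (hΩ : IsOpen Ω)
    {f : HHE n → ℝ} (hfc : Continuous f)
    (hf : hhTD f Ω) (hsub : ∀ x ∈ Ω, 0 ≤ laplacian f x) (hf0 : ∀ x, 0 ≤ f x)
    (hPΩ : hhP ν h ⊆ Ω) (hb : Bornology.IsBounded (hhP ν h)) {r : ℝ} (hr0 : 0 < r)
    (hr : ∀ x ∈ hhP ν h, ∃ i, h i - inner ℝ (ν i) x ≤ r) {ε : ℝ} (hε : 0 < ε) :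
    ∫ x in hhP ν h, f x ≤ (1 + r / (0.9 * ε)) *
      ∫ x in {x | x ∈ hhP ν h ∧ ∃ i, h i - ε < inner ℝ (ν i) x}, f x := by
  obtain ⟨k, hk, k1, k2, k3, k4, k5⟩ := hh_trap hε hr0
  set H : ℝ := r / (0.9 * ε) with hH
  have hH0 : 0 < H := by positivity
  have hM : ∀ t, |k t| ≤ H + 1 := fun t => abs_le.2 ⟨by linarith [k4 t], by linarith [k3 t]⟩
  have h0 := hh_softlim ν h hν hinj hΩ hfc hf hsub hf0 hPΩ hb r hr hk (by positivity) k1 k5 hM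
  have hcomp : IsCompact (hhP ν h) := Metric.isCompact_of_isClosed_isBounded (hhP_closed ν h) hb
  have hset : {x | x ∈ hhP ν h ∧ ∃ i, h i - ε < inner ℝ (ν i) x} = hhP ν h ∩ {x | hhd ν h x < ε} := by
    ext x
    simp only [Set.mem_ofPred_eq, Set.mem_inter_iff]
    refine and_congr_right fun _ => ⟨?_, ?_⟩
    · rintro ⟨i, hi⟩
      have := hhd_le ν h x i
      linarith
    · intro hx
      obtain ⟨i, hi⟩ := hhd_exists ν h x
      exact ⟨i, by linarith⟩
  have hBm : MeasurableSet {x | hhd ν h x < ε} := (isOpen_lt (hhd_cont ν h) continuous_const).measurableSet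
  rw [hset]
  have hintP : IntegrableOn f (hhP ν h) := hfc.continuousOn.integrableOn_compact hcomp
  have e1 := integral_inter_add_sdiff (μ := volume) (s := hhP ν h) hBm hintP
  have e2 : ∫ x, f x * k (hhd ν h x) = ∫ x in hhP ν h, f x * k (hhd ν h x) := by
    symm
    refine setIntegral_eq_integral_of_forall_compl_eq_zero fun x hx => ?_
    rw [hhd_mem, not_le] at hx
    rw [k1 _ (by linarith), mul_zero]
  have hintk : IntegrableOn (fun x => f x * k (hhd ν h x)) (hhP ν h) :=
    (hfc.mul (hk.comp (hhd_cont ν h))).continuousOn.integrableOn_compact hcomp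
  have e3 := integral_inter_add_sdiff (μ := volume) (s := hhP ν h) hBm hintk
  have i1 : ∫ x in hhP ν h ∩ {x | hhd ν h x < ε}, f x * k (hhd ν h x) ≤
      ∫ x in hhP ν h ∩ {x | hhd ν h x < ε}, H * f x := by
    refine setIntegral_mono_on (hintk.mono_set Set.inter_subset_left)
      ((hintP.mono_set Set.inter_subset_left).const_mul _) (hcomp.measurableSet.inter hBm) fun x hx => ?_
    rw [mul_comm]
    exact mul_le_mul_of_nonneg_right (k3 _) (hf0 x)
  have i2 : ∫ x in hhP ν h \ {x | hhd ν h x < ε}, f x * k (hhd ν h x) =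
      ∫ x in hhP ν h \ {x | hhd ν h x < ε}, - f x := by
    refine setIntegral_congr_fun (hcomp.measurableSet.diff hBm) fun x hx => ?_
    rw [k2 _ (not_lt.1 hx.2)]
    ring
  rw [integral_const_mul] at i1
  rw [integral_neg] at i2
  rw [e2, ← e3, i2] at h0
  rw [← e1]
  linarith

lemma hh_polyA {n : ℕ} {ι : Type} [Fintype ι] [Nonempty ι] (ν : ι → HHE n) (h : ι → ℝ)
    (hν : ∀ i, ‖ν i‖ = 1) (hinj : Function.Injective ν) {Ω : Set (HHE n)} (hΩ : IsOpen Ω)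
    {f : HHE n → ℝ} (hfc : Continuous f)
    (hf : hhTD f Ω) (hsub : ∀ x ∈ Ω, 0 ≤ laplacian f x) (hf0 : ∀ x, 0 ≤ f x)
    (hPΩ : hhP ν h ⊆ Ω) (hb : Bornology.IsBounded (hhP ν h)) {r : ℝ} (hr0 : 0 < r)
    (hr : ∀ x ∈ hhP ν h, ∃ i, h i - inner ℝ (ν i) x ≤ r) (c : HHE n) (hc : ∀ i, inner ℝ (ν i) c + r ≤ h i) :
    ∫⁻ x in hhP ν h, ENNReal.ofReal (f x) ≤ ENNReal.ofReal (1.2 * r) *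
      ∑ i, ∫⁻ x in hhF ν h i, ENNReal.ofReal (f x) ∂μHE[n-1] := by
  have hcomp : IsCompact (hhP ν h) := Metric.isCompact_of_isClosed_isBounded (hhP_closed ν h) hb
  have hperim := hh_perim ν h hν hinj hb c r hr0 hc
  set B := ∑ i, μHE[n-1] (hhF ν h i) with hB
  have hBfin : B ≠ ⊤ := by
    intro htop
    rw [htop, ENNReal.mul_top (by simpa using hr0)] at hperim
    have : (n : ENNReal) * volume (hhP ν h) < ⊤ := ENNReal.mul_lt_top (by simp) hcomp.measure_lt_top
    exact absurd this (not_lt.2 hperim)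
  set A := ∑ i, ∫⁻ x in hhF ν h i, ENNReal.ofReal (f x) ∂μHE[n-1] with hA
  have key : ∀ w : ℝ, 0 < w → ∫⁻ x in hhP ν h, ENNReal.ofReal (f x) ≤
      ENNReal.ofReal (1.2 * r) * (A + ENNReal.ofReal w * B) := by
    intro w hw
    have huc : UniformContinuousOn f (hhP ν h) := hcomp.uniformContinuousOn_of_continuous hfc.continuousOn
    obtain ⟨ε0, hε0, hε0f⟩ := Metric.uniformContinuousOn_iff.1 huc w hw
    set ε := min ε0 (0.08 * r) with hε
    have hεpos : 0 < ε := lt_min hε0 (by positivity)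
    have h1 := hh_band ν h hν hinj hΩ hfc hf hsub hf0 hPΩ hb hr0 hr hεpos
    have h2 := hh_layer ν h hν ε (ENNReal.ofReal w) (fun x => ENNReal.ofReal (f x))
      (hfc.measurable.ennreal_ofReal) (fun x hx y hy hxy => by
        rw [← ENNReal.ofReal_add (hf0 y) hw.le]
        apply ENNReal.ofReal_le_ofReal
        have := hε0f x hx y hy (hxy.trans_le (min_le_left _ _))
        rw [Real.dist_eq] at this
        linarith [le_abs_self (f x - f y)])
    have hintP : IntegrableOn f (hhP ν h) := hfc.continuousOn.integrableOn_compact hcomp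
    rw [← ofReal_integral_eq_lintegral_ofReal hintP (Filter.Eventually.of_forall hf0)]
    rw [← ofReal_integral_eq_lintegral_ofReal (hintP.mono_set fun x hx => hx.1) (Filter.Eventually.of_forall hf0)] at h2
    have hcoef : (1 + r / (0.9 * ε)) * ε ≤ 1.2 * r := by
      have h3 : ε ≤ 0.08 * r := min_le_right _ _
      have h4 : (1 + r / (0.9 * ε)) * ε = ε + r / 0.9 := by field_simp
      rw [h4]
      have : r / 0.9 ≤ 1.12 * r := by rw [div_le_iff₀ (by norm_num)]; nlinarith
      linarith
    calc _ ≤ ENNReal.ofReal ((1 + r / (0.9 * ε)) *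
            ∫ x in {x | x ∈ hhP ν h ∧ ∃ i, h i - ε < inner ℝ (ν i) x}, f x) := ENNReal.ofReal_le_ofReal h1
      _ = ENNReal.ofReal (1 + r / (0.9 * ε)) * ENNReal.ofReal
            (∫ x in {x | x ∈ hhP ν h ∧ ∃ i, h i - ε < inner ℝ (ν i) x}, f x) := ENNReal.ofReal_mul (by positivity)
      _ ≤ ENNReal.ofReal (1 + r / (0.9 * ε)) * (ENNReal.ofReal ε * (A + ENNReal.ofReal w * B)) := by
            gcongr
            refine h2.trans (le_of_eq ?_)
            rw [Finset.sum_add_distrib, ← Finset.mul_sum]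
      _ = ENNReal.ofReal ((1 + r / (0.9 * ε)) * ε) * (A + ENNReal.ofReal w * B) := by
            rw [← mul_assoc, ← ENNReal.ofReal_mul (by positivity)]
      _ ≤ _ := by gcongr
  have ht : Filter.Tendsto (fun w : ℝ => ENNReal.ofReal (1.2 * r) * (A + ENNReal.ofReal w * B)) (nhdsWithin 0 (Set.Ioi 0))
      (nhds (ENNReal.ofReal (1.2 * r) * (A + 0 * B))) := by
    refine ENNReal.Tendsto.const_mul ?_ (Or.inr ENNReal.ofReal_ne_top)
    refine tendsto_const_nhds.add (ENNReal.Tendsto.mul_const ?_ (Or.inr hBfin))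
    have : Filter.Tendsto ENNReal.ofReal (nhds 0) (nhds (ENNReal.ofReal 0)) := ENNReal.continuous_ofReal.tendsto 0
    rw [ENNReal.ofReal_zero] at this
    exact this.mono_left nhdsWithin_le_nhds
  rw [zero_mul, add_zero] at ht
  refine ge_of_tendsto ht ?_
  filter_upwards [self_mem_nhdsWithin] with w hw using key w hw

lemma hh_lip {n : ℕ} (d : ℕ) {π : HHE n → HHE n} (hπ : LipschitzWith 1 π) (s : Set (HHE n)) :
    μHE[d] (π '' s) ≤ μHE[d] s := by
  simp_rw [Measure.euclideanHausdorffMeasure_def, Measure.smul_apply]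
  have := hπ.hausdorffMeasure_image_le (d := d) (by positivity) s
  simp only [ENNReal.coe_one, ENNReal.one_rpow, one_mul] at this
  gcongr

lemma hh_proj {n : ℕ} {A : Set (HHE n)} (hA : IsClosed A) (hc : Convex ℝ A) (hne : A.Nonempty) :
    ∃ π : HHE n → HHE n, LipschitzWith 1 π ∧ (∀ x, π x ∈ A) ∧
      (∀ x, ∀ q ∈ A, (∀ a ∈ A, (inner ℝ (x - q) (a - q) : ℝ) ≤ 0) → π x = q) ∧
      ∀ x, ∀ a ∈ A, ‖x - π x‖ ≤ ‖x - a‖ := by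
  choose π hπ1 hπ2 using exists_norm_eq_iInf_of_complete_convex hne hA.isComplete hc
  have hπ3 : ∀ x, ∀ a ∈ A, (inner ℝ (x - π x) (a - π x) : ℝ) ≤ 0 := fun x =>
    (norm_eq_iInf_iff_real_inner_le_zero hc (hπ1 x)).1 (hπ2 x)
  refine ⟨π, ?_, hπ1, ?_, ?_⟩
  · refine LipschitzWith.of_dist_le_mul fun x y => ?_
    rw [NNReal.coe_one, one_mul, dist_eq_norm, dist_eq_norm]
    have h1 := hπ3 x _ (hπ1 y)
    have h2 := hπ3 y _ (hπ1 x)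
    have h3 : (inner ℝ (π x - π y) (π x - π y) : ℝ) ≤ inner ℝ (x - y) (π x - π y) := by
      have e : (inner ℝ (x - y) (π x - π y) : ℝ) - inner ℝ (π x - π y) (π x - π y) =
          - inner ℝ (x - π x) (π y - π x) - inner ℝ (y - π y) (π x - π y) := by
        simp only [inner_sub_left, inner_sub_right]; ring
      linarith
    have h4 := real_inner_le_norm (x - y) (π x - π y)
    rw [real_inner_self_eq_norm_sq] at h3
    by_contra! hcon
    have h5 : 0 < ‖π x - π y‖ := (norm_nonneg _).trans_lt hcon
    nlinarith
  · intro x q hq hn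
    have h1 := hπ3 x q hq
    have h2 := hn _ (hπ1 x)
    have h3 : (inner ℝ (π x - q) (π x - q) : ℝ) = inner ℝ (x - q) (π x - q) + inner ℝ (x - π x) (q - π x) := by
      simp only [inner_sub_left, inner_sub_right]; ring
    have h4 : (inner ℝ (π x - q) (π x - q) : ℝ) = 0 := le_antisymm (by linarith) real_inner_self_nonneg
    exact sub_eq_zero.1 (inner_self_eq_zero.1 h4)
  · intro x a ha
    have h1 := hπ3 x a ha
    have h2 : ‖x - a‖ ^ 2 = ‖x - π x‖ ^ 2 - 2 * inner ℝ (x - π x) (a - π x) + ‖a - π x‖ ^ 2 := by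
      rw [← norm_sub_sq_real]; congr 2; abel
    by_contra! hcon
    have := norm_nonneg (x - a)
    nlinarith [sq_nonneg ‖a - π x‖]

lemma hh_ray {n : ℕ} {B : Set (HHE n)} (hB : Bornology.IsBounded B) {q ν : HHE n} (hq : q ∈ B) (hν : ν ≠ 0) :
    ∃ t : ℝ, 0 ≤ t ∧ q + t • ν ∈ frontier B := by
  by_contra! hcon
  have hpre : IsPreconnected ((fun t : ℝ => q + t • ν) '' Set.Ici 0) :=
    isPreconnected_Ici.image _ (by fun_prop)
  obtain ⟨R, hR⟩ := hB.subset_closedBall (0 : HHE n)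
  have hν' : 0 < ‖ν‖ := norm_pos_iff.2 hν
  set t0 : ℝ := (‖q‖ + |R| + 1) / ‖ν‖ with ht0
  have ht00 : 0 ≤ t0 := by positivity
  have hout : q + t0 • ν ∉ B := by
    intro hmem
    have h1 := hR hmem
    rw [mem_closedBall_zero_iff] at h1
    have h2 : ‖t0 • ν‖ ≤ ‖q + t0 • ν‖ + ‖q‖ := by
      have := norm_sub_le (q + t0 • ν) q
      simpa using this
    rw [norm_smul, Real.norm_of_nonneg ht00, ht0, div_mul_cancel₀ _ hν'.ne'] at h2
    linarith [le_abs_self R]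
  have hsub : (fun t : ℝ => q + t • ν) '' Set.Ici 0 ⊆ interior B ∪ (closure B)ᶜ := by
    rintro _ ⟨t, ht, rfl⟩
    by_cases h1 : q + t • ν ∈ closure B
    · left
      by_contra h2
      exact hcon t ht ⟨h1, h2⟩
    · right; exact h1
  have hq0 : q ∈ (fun t : ℝ => q + t • ν) '' Set.Ici 0 := ⟨0, by simp, by simp⟩
  obtain ⟨z, _, hz1, hz2⟩ := hpre (interior B) (closure B)ᶜ isOpen_interior isClosed_closure.isOpen_compl hsub
    ⟨q, hq0, by
      rcases hsub hq0 with h | h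
      · exact h
      · exact absurd (subset_closure hq) h⟩
    ⟨q + t0 • ν, ⟨t0, ht00, rfl⟩, by
      rcases hsub ⟨t0, ht00, rfl⟩ with h | h
      · exact absurd (interior_subset h) hout
      · exact h⟩
  exact hz2 (interior_subset_closure hz1)

lemma hh_push {n : ℕ} (d : ℕ) {A B E : Set (HHE n)} {π : HHE n → HHE n} (hπ : LipschitzWith 1 π)
    (hπ2 : ∀ x, ∀ q ∈ A, (∀ a ∈ A, (inner ℝ (x - q) (a - q) : ℝ) ≤ 0) → π x = q)
    (hAB : A ⊆ B) (hB : Bornology.IsBounded B) (hE : E ⊆ A)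
    (hn : ∀ q ∈ E, ∃ ν : HHE n, ν ≠ 0 ∧ ∀ a ∈ A, (inner ℝ ν (a - q) : ℝ) ≤ 0)
    (G : HHE n → ENNReal) (hG : Measurable G) :
    ∫⁻ x in E, G x ∂μHE[d] ≤ ∫⁻ x in frontier B, G (π x) ∂μHE[d] := by
  rw [← lintegral_map (μ := μHE[d].restrict (frontier B)) hG hπ.continuous.measurable]
  refine lintegral_mono' ?_ le_rfl
  refine Measure.le_iff.2 fun T hT => ?_
  rw [Measure.restrict_apply hT, Measure.map_apply hπ.continuous.measurable hT,
    Measure.restrict_apply (hπ.continuous.measurable hT)]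
  refine le_trans (measure_mono ?_) (hh_lip d hπ _)
  rintro q ⟨hqT, hqE⟩
  obtain ⟨ν, hν0, hν⟩ := hn q hqE
  obtain ⟨t, ht, htB⟩ := hh_ray hB (hAB (hE hqE)) hν0
  have : π (q + t • ν) = q := by
    refine hπ2 _ q (hE hqE) fun a ha => ?_
    rw [add_sub_cancel_left, inner_smul_left]
    exact mul_nonpos_of_nonneg_of_nonpos (by simpa using ht) (hν a ha)
  exact ⟨q + t • ν, ⟨by simpa [this] using hqT, htB⟩, this⟩

section HHsec9
open scoped Pointwise
lemma hh_shrink {n : ℕ} {Ω : Set (HHE n)} (hΩ : IsOpen Ω) (hc : Convex ℝ Ω) (h0 : (0 : HHE n) ∈ Ω)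
    {s : ℝ} (hs : 0 ≤ s) (hs1 : s < 1) {x : HHE n} (hx : x ∈ closure Ω) : s • x ∈ Ω := by
  have h1 := hc.combo_interior_closure_subset_interior (a := 1 - s) (b := s) (by linarith) hs (by ring)
  rw [hΩ.interior_eq] at h1
  apply h1
  exact Set.mem_add.2 ⟨(1 - s) • (0 : HHE n), Set.smul_mem_smul_set h0, s • x, Set.smul_mem_smul_set hx, by simp⟩

lemma hh_poly {n : ℕ} (hn : 0 < n) {Ω : Set (HHE n)} (hΩ : IsOpen Ω) (hb : Bornology.IsBounded Ω)
    (hc : Convex ℝ Ω) (h0 : (0 : HHE n) ∈ Ω) {l : ℝ} (hl : 1 < l) :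
    ∃ (N : Finset (HHE n)) (h : {x // x ∈ N} → ℝ), N.Nonempty ∧ (∀ i : {x // x ∈ N}, ‖(i : HHE n)‖ = 1) ∧
      (∀ i, 0 < h i) ∧ closure Ω ⊆ hhP (fun i : {x // x ∈ N} => (i : HHE n)) h ∧
      ∀ x ∈ hhP (fun i : {x // x ∈ N} => (i : HHE n)) h, l⁻¹ • x ∈ closure Ω := by
  set K := closure Ω with hK
  have hKc : IsCompact K := hb.isCompact_closure
  have hKconv : Convex ℝ K := hc.closure
  have hl0 : 0 < l := by linarith
  set H : HHE n → ℝ := fun ν => sSup ((fun x => (inner ℝ ν x : ℝ)) '' K) with hH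
  have hbdd : ∀ ν : HHE n, BddAbove ((fun x => (inner ℝ ν x : ℝ)) '' K) := fun ν =>
    (hKc.image (by fun_prop)).bddAbove
  have hHle : ∀ ν : HHE n, ∀ x ∈ K, inner ℝ ν x ≤ H ν := fun ν x hx => le_csSup (hbdd ν) ⟨x, hx, rfl⟩
  have h0K : (0 : HHE n) ∈ K := subset_closure h0
  -- the shell
  set W : Set (HHE n) := {x | l⁻¹ • x ∈ Ω} with hW
  set Z : Set (HHE n) := {x | l⁻¹ • x ∈ K} with hZ
  have hcs : Continuous fun x : HHE n => l⁻¹ • x := by fun_prop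
  have hWo : IsOpen W := hΩ.preimage hcs
  have hZcl : IsClosed Z := isClosed_closure.preimage hcs
  have hZeq : Z = l • K := by
    ext x
    rw [Set.mem_smul_set_iff_inv_smul_mem₀ hl0.ne']
    rfl
  have hZc : IsCompact Z := by rw [hZeq]; exact hKc.smul l
  have hC : IsCompact (Z \ W) := hZc.diff hWo
  have hcov : Z \ W ⊆ ⋃ ν ∈ Metric.sphere (0 : HHE n) 1, {y | H ν < inner ℝ ν y} := by
    rintro y ⟨hyZ, hyW⟩
    have hyK : y ∉ K := by
      intro hy
      exact hyW (hh_shrink hΩ hc h0 (by positivity) (inv_lt_one_of_one_lt₀ hl) hy)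
    obtain ⟨f, u, hf1, hf2⟩ := geometric_hahn_banach_closed_point hKconv isClosed_closure hyK
    set v : HHE n := (InnerProductSpace.toDual ℝ (HHE n)).symm f with hv
    have hfv : ∀ x, f x = inner ℝ v x := fun x => by rw [hv, InnerProductSpace.toDual_symm_apply]
    have hu0 : 0 < u := by simpa using hf1 0 h0K
    have hv0 : v ≠ 0 := by
      intro hv0
      rw [hfv, hv0, inner_zero_left] at hf2
      linarith
    have hvn : 0 < ‖v‖ := norm_pos_iff.2 hv0
    simp only [Set.mem_iUnion]
    refine ⟨‖v‖⁻¹ • v, by simp [norm_smul, hvn.ne'], ?_⟩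
    simp only [Set.mem_ofPred_eq]
    have h1 : H (‖v‖⁻¹ • v) ≤ ‖v‖⁻¹ * u := by
      refine csSup_le (Set.Nonempty.image _ ⟨0, h0K⟩) ?_
      rintro _ ⟨x, hx, rfl⟩
      simp only [inner_smul_left, ← hfv]
      have := (hf1 x hx).le
      simp only [conj_trivial]
      gcongr
    refine h1.trans_lt ?_
    rw [inner_smul_left, ← hfv]
    simp only [conj_trivial]
    gcongr
  obtain ⟨b, hbs, hbf, hbc⟩ := hC.elim_finite_subcover_image
    (fun ν _ => isOpen_lt continuous_const (by fun_prop)) hcov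
  set N := hbf.toFinset with hN
  have hNb : ∀ i : {x // x ∈ N}, ‖(i : HHE n)‖ = 1 := fun i => by
    have := hbs (hbf.mem_toFinset.1 i.2)
    simpa using this
  set P := hhP (fun i : {x // x ∈ N} => (i : HHE n)) (fun i => H i) with hP
  have hKP : K ⊆ P := fun x hx i => hHle i x hx
  have hPC : ∀ x ∈ P, x ∉ Z \ W := by
    intro x hx hxC
    have h1 := hbc hxC
    simp only [Set.mem_iUnion] at h1
    obtain ⟨ν, hνb, hν⟩ := h1
    have h2 := hx ⟨ν, hbf.mem_toFinset.2 hνb⟩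
    exact absurd hν (not_lt.2 h2)
  have hPZ : P ⊆ Z := by
    intro x hx
    by_contra hxZ
    have hpre : IsPreconnected P := (hhP_convex _ _).isPreconnected
    obtain ⟨z, _, hz1, hz2⟩ := hpre W Zᶜ hWo hZcl.isOpen_compl (fun y hy => by
      by_cases h1 : y ∈ Z
      · left
        by_contra h2
        exact hPC y hy ⟨h1, h2⟩
      · right; exact h1) ⟨0, hKP h0K, by simpa [hW] using h0⟩ ⟨x, hx, hxZ⟩
    exact hz2 (subset_closure hz1)
  refine ⟨N, fun i => H i, ?_, hNb, fun i => ?_, hKP, fun x hx => hPZ hx⟩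
  · by_contra hne
    rw [Finset.not_nonempty_iff_eq_empty] at hne
    have huniv : (Set.univ : Set (HHE n)) ⊆ Z := by
      intro x _
      refine hPZ fun i => ?_
      have h3 : ∀ y, y ∉ N := fun y => by rw [hne]; simp
      exact absurd i.2 (h3 _)
    have : Nonempty (Fin n) := ⟨⟨0, hn⟩⟩
    have : Nontrivial (HHE n) := inferInstance
    exact NormedSpace.unbounded_univ ℝ (HHE n) (hZc.isBounded.subset huniv)
  · obtain ⟨s, hs, hsb⟩ := Metric.isOpen_iff.1 hΩ 0 h0
    have h1 : (s / 2) • (i : HHE n) ∈ K := by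
      apply subset_closure
      apply hsb
      rw [mem_ball_zero_iff, norm_smul, hNb i, mul_one, Real.norm_of_nonneg (by positivity)]
      linarith
    have h2 := hHle i _ h1
    rw [inner_smul_right, real_inner_self_eq_norm_sq, hNb i] at h2
    have : 0 < s / 2 * 1 ^ 2 := by positivity
    linarith

end HHsec9

section HHsec10
open scoped Pointwise
lemma hh_geo {n : ℕ} (hn : 0 < n) {Ω : Set (HHE n)} (hΩ : IsOpen Ω) (hb : Bornology.IsBounded Ω)
    (hc : Convex ℝ Ω) (h0 : (0 : HHE n) ∈ Ω) {l : ℝ} (hl : 1 < l) :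
    ∃ r : ℝ, 0 < r ∧
      ENNReal.ofReal r * μHE[n-1] (frontier (closure Ω)) ≤ n * (ENNReal.ofReal (l ^ n) * volume (closure Ω)) ∧
      ∀ f : HHE n → ℝ, Continuous f → hhTD f Ω → (∀ x ∈ Ω, 0 ≤ laplacian f x) → (∀ x, 0 ≤ f x) →
      ∀ ω : ENNReal, (∀ x ∈ closure Ω, ∀ y, ‖x - y‖ ≤ ‖x - (l⁻¹ * l⁻¹) • x‖ →
        ENNReal.ofReal (f y) ≤ ENNReal.ofReal (f x) + ω) →
      ∫⁻ x in {x | (l * l) • x ∈ closure Ω}, ENNReal.ofReal (f x) ≤ ENNReal.ofReal (1.2 * r) *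
        (∫⁻ x in frontier (closure Ω), ENNReal.ofReal (f x) ∂μHE[n-1] + ω * μHE[n-1] (frontier (closure Ω))) := by
  obtain ⟨N, h, hN, hν, hh, hKP, hPK⟩ := hh_poly hn hΩ hb hc h0 hl
  have hl0 : 0 < l := by linarith
  have : Nonempty {x // x ∈ N} := hN.to_subtype
  set ν : {x // x ∈ N} → HHE n := fun i => (i : HHE n) with hνdef
  have hinj : Function.Injective ν := Subtype.val_injective
  set K := closure Ω with hK
  have hKb : Bornology.IsBounded K := hb.closure
  have hKc : IsCompact K := hb.isCompact_closure
  set m : ℝ := l⁻¹ * l⁻¹ with hm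
  have hm0 : 0 < m := by positivity
  have hll : l⁻¹ < 1 := inv_lt_one_of_one_lt₀ hl
  have hli : 0 < l⁻¹ := by positivity
  have hm1 : m ≤ 1 := by nlinarith
  have hml : l * l * m = 1 := by rw [hm]; field_simp
  have hml2 : m * (l * l) = 1 := by rw [hm]; field_simp
  set h' : {x // x ∈ N} → ℝ := fun i => m * h i with hh'
  set P := hhP ν h with hP
  set Q := hhP ν h' with hQ
  have hPl : P ⊆ l • K := fun x hx => by
    rw [Set.mem_smul_set_iff_inv_smul_mem₀ hl0.ne']; exact hPK x hx
  have hPb : Bornology.IsBounded P := (hKc.smul l).isBounded.subset hPl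
  have hQP : ∀ x ∈ Q, (l * l) • x ∈ P := fun x hx i => by
    have := hx i
    rw [inner_smul_right]
    have h2 : l * l * (m * h i) = h i := by rw [← mul_assoc, hml, one_mul]
    have h3 := mul_le_mul_of_nonneg_left this (by positivity : 0 ≤ l * l)
    rw [h2] at h3
    exact h3
  have hPQ : ∀ x, (l * l) • x ∈ P → x ∈ Q := fun x hx i => by
    have := hx i
    rw [inner_smul_right] at this
    have h3 := mul_le_mul_of_nonneg_left this hm0.le
    rw [← mul_assoc, hml2, one_mul] at h3
    exact h3
  have hQΩ : Q ⊆ Ω := fun x hx => by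
    have h1 := hPK _ (hQP x hx)
    have h2 := hh_shrink hΩ hc h0 hli.le hll h1
    rw [smul_smul, smul_smul] at h2
    have : l⁻¹ * l⁻¹ * (l * l) = 1 := by field_simp
    rwa [this, one_smul] at h2
  have hQK : Q ⊆ K := hQΩ.trans subset_closure
  have hQb : Bornology.IsBounded Q := hKb.subset hQK
  have hQc : IsCompact Q := Metric.isCompact_of_isClosed_isBounded (hhP_closed ν h') hQb
  have h0Q : (0 : HHE n) ∈ Q := fun i => by
    rw [inner_zero_right]; exact mul_nonneg hm0.le (hh i).le
  obtain ⟨c, hcQ, hcmax⟩ := hQc.exists_isMaxOn ⟨0, h0Q⟩ (hhd_cont ν h').continuousOn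
  set r := hhd ν h' c with hr
  have hr0 : 0 < r := by
    have h1 : hhd ν h' 0 ≤ r := hcmax h0Q
    obtain ⟨i, hi⟩ := hhd_exists ν h' 0
    rw [inner_zero_right, sub_zero] at hi
    have : 0 < h' i := mul_pos hm0 (hh i)
    linarith
  have hcr : ∀ i, inner ℝ (ν i) c + r ≤ h' i := fun i => by
    have := hhd_le ν h' c i
    linarith
  have hcr' : ∀ i, inner ℝ (ν i) c + r ≤ h i := fun i => by
    have := hcr i
    have h2 : m * h i ≤ 1 * h i := mul_le_mul_of_nonneg_right hm1 (hh i).le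
    have h3 : h' i = m * h i := rfl
    linarith
  have hrQ : ∀ x ∈ Q, ∃ i, h' i - inner ℝ (ν i) x ≤ r := fun x hx => by
    obtain ⟨i, hi⟩ := hhd_exists ν h' x
    exact ⟨i, hi ▸ hcmax hx⟩
  refine ⟨r, hr0, ?_, ?_⟩
  · have hper := hh_perim ν h hν hinj hPb c r hr0 hcr'
    have hvol : volume P ≤ ENNReal.ofReal (l ^ n) * volume K := by
      refine (measure_mono hPl).trans ?_
      rw [Measure.addHaar_smul]
      simp [abs_of_pos (pow_pos hl0 n)]
    have hfr : frontier P ⊆ ⋃ i, hhF ν h i := by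
      intro x hx
      have hxP : x ∈ P := (hhP_closed ν h).frontier_subset hx
      by_contra hcon
      simp only [Set.mem_iUnion, not_exists] at hcon
      have hlt : ∀ i, inner ℝ (ν i) x < h i := fun i =>
        lt_of_le_of_ne (hxP i) fun he => hcon i ⟨hxP, he⟩
      have hop : IsOpen {y : HHE n | ∀ i, inner ℝ (ν i) y < h i} := by
        rw [Set.ofPred_forall]
        exact isOpen_iInter_of_finite fun i => isOpen_lt (by fun_prop) continuous_const
      have : x ∈ interior P := mem_interior.2 ⟨_, fun y hy i => (hy i).le, hop, hlt⟩
      exact hx.2 this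
    have hσ : μHE[n-1] (frontier K) ≤ ∑ i, μHE[n-1] (hhF ν h i) := by
      obtain ⟨π, hπ1, hπ2, hπ3, hπ4⟩ := hh_proj (A := K) isClosed_closure hc.closure ⟨0, subset_closure h0⟩
      have h1 := hh_push (n-1) hπ1 hπ3 hKP hPb (E := frontier K) isClosed_closure.frontier_subset (by
        intro q hq
        have hqΩ : q ∉ Ω := fun hqΩ => hq.2 (interior_mono subset_closure (by rwa [hΩ.interior_eq]))
        obtain ⟨g, hg⟩ := geometric_hahn_banach_open_point hc hΩ hqΩ
        refine ⟨(InnerProductSpace.toDual ℝ (HHE n)).symm g, ?_, ?_⟩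
        · intro hz
          have hg0 : g = 0 := by simpa using hz
          have := hg 0 h0
          simp [hg0] at this
        · intro a ha
          rw [InnerProductSpace.toDual_symm_apply, map_sub, sub_nonpos]
          have : K ⊆ {a | g a ≤ g q} :=
            closure_minimal (fun a ha => (hg a ha).le) (isClosed_le (by fun_prop) continuous_const)
          exact this ha) (fun _ => 1) measurable_const
      simp only [lintegral_const, one_mul, Measure.restrict_apply MeasurableSet.univ, Set.univ_inter] at h1
      refine h1.trans ((measure_mono hfr).trans ?_)
      exact measure_iUnion_fintype_le _ _
    calc ENNReal.ofReal r * μHE[n-1] (frontier K) ≤ ENNReal.ofReal r * ∑ i, μHE[n-1] (hhF ν h i) := by gcongr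
      _ ≤ n * volume P := hper
      _ ≤ _ := by gcongr
  · intro f hfc hf hsub hf0 ω hω
    have hA := hh_polyA ν h' hν hinj hΩ hfc hf hsub hf0 hQΩ hQb hr0 hrQ c hcr
    have hKQ : {x | (l * l) • x ∈ K} ⊆ Q := fun x hx => hPQ x (hKP hx)
    refine (lintegral_mono_set hKQ).trans (hA.trans ?_)
    gcongr
    have hGm : Measurable fun x => ENNReal.ofReal (f x) := hfc.measurable.ennreal_ofReal
    rw [← tsum_fintype (L := .unconditional _), ← lintegral_iUnion₀ (fun i => (hhF_closed ν h' i).measurableSet.nullMeasurableSet)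
      (fun i j hij => hh_overlap ν h' hν hinj c (fun i => by have := hcr i; linarith) hij)]
    obtain ⟨π, hπ1, hπ2, hπ3, hπ4⟩ := hh_proj (A := Q) (hhP_closed ν h') (hhP_convex ν h') ⟨0, h0Q⟩
    have h1 := hh_push (n-1) hπ1 hπ3 hQK hKb (E := ⋃ i, hhF ν h' i) (Set.iUnion_subset fun i x hx => hx.1) (by
      intro q hq
      obtain ⟨i, hi⟩ := Set.mem_iUnion.1 hq
      refine ⟨ν i, fun hz => by have := hν i; simp only [hνdef] at hz; rw [hz] at this; simp at this, fun a ha => ?_⟩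
      rw [inner_sub_right, hi.2, sub_nonpos]
      exact ha i) _ hGm
    refine h1.trans ?_
    have h2 : ∫⁻ x in frontier K, ENNReal.ofReal (f (π x)) ∂μHE[n-1] ≤
        ∫⁻ x in frontier K, (ENNReal.ofReal (f x) + ω) ∂μHE[n-1] := by
      refine setLIntegral_mono (hGm.add measurable_const) fun x hx => ?_
      have hxK : x ∈ K := isClosed_closure.frontier_subset hx
      refine hω x hxK _ (hπ4 x _ (hPQ _ ?_))
      rw [smul_smul, hml, one_smul]
      exact hKP hxK
    refine h2.trans ?_
    rw [lintegral_add_left hGm]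
    simp


end HHsec10

section HHsec11
open scoped Pointwise
lemma hh_lim {n : ℕ} (hn : 0 < n) {Ω : Set (HHE n)} (hΩ : IsOpen Ω) (hb : Bornology.IsBounded Ω)
    (hc : Convex ℝ Ω) (h0 : (0 : HHE n) ∈ Ω) :
    μHE[n-1] (frontier (closure Ω)) ≠ ⊤ ∧ μHE[n-1] (frontier (closure Ω)) ≠ 0 ∧
      ∀ f : HHE n → ℝ, Continuous f → hhTD f Ω → (∀ x ∈ Ω, 0 ≤ laplacian f x) → (∀ x, 0 ≤ f x) →
      (∫⁻ x in Ω, ENNReal.ofReal (f x)) * μHE[n-1] (frontier (closure Ω)) ≤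
        ENNReal.ofReal 1.2 * (n * volume (closure Ω)) * ∫⁻ x in frontier (closure Ω), ENNReal.ofReal (f x) ∂μHE[n-1] := by
  set K := closure Ω with hK
  set σ := μHE[n-1] (frontier K) with hσ
  have hKc : IsCompact K := hb.isCompact_closure
  have hKfin : volume K ≠ ⊤ := hKc.measure_lt_top.ne
  have hσt : σ ≠ ⊤ := by
    obtain ⟨r, hr, h1, -⟩ := hh_geo hn hΩ hb hc h0 (l := 2) (by norm_num)
    intro ht
    rw [← hσ, ht, ENNReal.mul_top (by simpa using hr)] at h1
    exact (ENNReal.mul_lt_top (by simp) (ENNReal.mul_lt_top (by simp) hKfin.lt_top)).ne (top_le_iff.1 h1)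
  have hσ0 : σ ≠ 0 := by
    obtain ⟨r, hr, -, h1⟩ := hh_geo hn hΩ hb hc h0 (l := 2) (by norm_num)
    have h2 := h1 (fun _ => 1) continuous_const ⟨fun _ _ => differentiableAt_const _, fun _ _ => by
      simp⟩ (fun x _ => by simp [laplacian]) (fun _ => zero_le_one) 0 (fun _ _ _ _ => by simp)
    intro h3
    rw [← hσ, h3] at h2
    simp only [ENNReal.ofReal_one, lintegral_const, one_mul, Measure.restrict_apply MeasurableSet.univ, Set.univ_inter,
      mul_zero, add_zero] at h2
    rw [← hσ, h3, mul_zero] at h2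
    have hop : IsOpen {x : HHE n | ((2 : ℝ) * 2) • x ∈ Ω} := hΩ.preimage (by fun_prop)
    have h4 := hop.measure_pos volume ⟨0, by simpa using h0⟩
    have hsub' : {x : HHE n | ((2 : ℝ) * 2) • x ∈ Ω} ⊆ {x : HHE n | ((2 : ℝ) * 2) • x ∈ K} := by
      intro x hx
      have hx' : ((2 : ℝ) * 2) • x ∈ Ω := hx
      have : ((2 : ℝ) * 2) • x ∈ K := subset_closure hx'
      exact this
    exact absurd (h4.trans_le ((measure_mono hsub').trans h2)) (lt_irrefl _)
  refine ⟨hσt, hσ0, fun f hfc hf hsub hf0 => ?_⟩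
  set G : HHE n → ENNReal := fun x => ENNReal.ofReal (f x) with hG
  have hGm : Measurable G := hfc.measurable.ennreal_ofReal
  set I := ∫⁻ x in frontier K, G x ∂μHE[n-1] with hI
  set C := ENNReal.ofReal 1.2 * (n * volume K) with hC
  have hCt : C ≠ ⊤ := (ENNReal.mul_lt_top (by simp) (ENNReal.mul_lt_top (by simp) hKfin.lt_top)).ne
  set l : ℕ → ℝ := fun m => 1 + 1 / ((m : ℝ) + 1) with hl
  have hl1 : ∀ m, 1 < l m := fun m => by
    have : (0 : ℝ) < 1 / ((m : ℝ) + 1) := by positivity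
    simp only [hl]; linarith
  have hlt : Filter.Tendsto l Filter.atTop (nhds 1) := by
    simpa [hl] using tendsto_one_div_add_atTop_nhds_zero_nat.const_add (1 : ℝ)
  obtain ⟨R, hR0, hR⟩ := hKc.isBounded.exists_pos_norm_le
  have key : ∀ ε : ℝ, 0 < ε → (∫⁻ x in Ω, G x) * σ ≤ C * (I + ENNReal.ofReal ε * σ) := by
    intro ε hε
    have hu := hKc.uniformContinuousAt_of_continuousAt f (fun a _ => hfc.continuousAt) (Metric.dist_mem_uniformity hε)
    obtain ⟨δ, hδ, hδ2⟩ := Metric.mem_uniformity_dist.1 hu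
    have hev : ∀ᶠ m in Filter.atTop, (1 - (l m)⁻¹ * (l m)⁻¹) * R < δ := by
      have h1 : Filter.Tendsto (fun m => (1 - (l m)⁻¹ * (l m)⁻¹) * R) Filter.atTop (nhds ((1 - 1⁻¹ * 1⁻¹) * R)) :=
        (((hlt.inv₀ one_ne_zero).mul (hlt.inv₀ one_ne_zero)).const_sub 1).mul_const R
      apply h1.eventually_lt_const
      simpa using hδ
    set a : ℕ → ENNReal := fun m => ∫⁻ x in {x | (l m * l m) • x ∈ K}, G x with ha
    have hSm : ∀ m, MeasurableSet {x : HHE n | (l m * l m) • x ∈ K} := fun m =>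
      (isClosed_closure.preimage (f := fun x : HHE n => (l m * l m) • x) (by fun_prop)).measurableSet
    have hB : ∀ᶠ m in Filter.atTop, a m ≤ ENNReal.ofReal (l m ^ n) * (C * (I + ENNReal.ofReal ε * σ)) / σ := by
      filter_upwards [hev] with m hm
      obtain ⟨r, hr, h1, h2⟩ := hh_geo hn hΩ hb hc h0 (hl1 m)
      have h3 := h2 f hfc hf hsub hf0 (ENNReal.ofReal ε) (by
        intro x hx y hxy
        rw [← ENNReal.ofReal_add (hf0 x) hε.le]
        apply ENNReal.ofReal_le_ofReal
        have hli : (l m)⁻¹ < 1 := inv_lt_one_of_one_lt₀ (hl1 m)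
        have hl0 : 0 < (l m)⁻¹ := by have := hl1 m; positivity
        have hd : dist x y < δ := by
          rw [dist_eq_norm]
          refine hxy.trans_lt (lt_of_le_of_lt ?_ hm)
          have : x - ((l m)⁻¹ * (l m)⁻¹) • x = (1 - (l m)⁻¹ * (l m)⁻¹) • x := by rw [sub_smul, one_smul]
          have h5 : 0 ≤ 1 - (l m)⁻¹ * (l m)⁻¹ := by nlinarith
          rw [this, norm_smul, Real.norm_of_nonneg h5]
          exact mul_le_mul_of_nonneg_left (hR x hx) h5
        have h4 : dist (f x) (f y) < ε := hδ2 hd hx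
        rw [Real.dist_eq] at h4
        have := (abs_lt.1 h4).1
        linarith)
      rw [ENNReal.le_div_iff_mul_le (Or.inl hσ0) (Or.inl hσt)]
      calc a m * σ ≤ ENNReal.ofReal (1.2 * r) * (I + ENNReal.ofReal ε * σ) * σ := by
            gcongr
        _ = ENNReal.ofReal 1.2 * (ENNReal.ofReal r * σ) * (I + ENNReal.ofReal ε * σ) := by
            rw [ENNReal.ofReal_mul (by norm_num)]; ring
        _ ≤ ENNReal.ofReal 1.2 * (n * (ENNReal.ofReal (l m ^ n) * volume K)) * (I + ENNReal.ofReal ε * σ) := by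
            gcongr
        _ = _ := by rw [hC]; ring
    have hBt : Filter.Tendsto (fun m => ENNReal.ofReal (l m ^ n) * (C * (I + ENNReal.ofReal ε * σ)) / σ) Filter.atTop
        (nhds (C * (I + ENNReal.ofReal ε * σ) / σ)) := by
      have h1 : Filter.Tendsto (fun m => ENNReal.ofReal (l m ^ n)) Filter.atTop (nhds 1) := by
        have := ENNReal.tendsto_ofReal (hlt.pow n)
        simpa using this
      have h2 := ENNReal.Tendsto.mul_const (b := C * (I + ENNReal.ofReal ε * σ)) h1 (Or.inl one_ne_zero)
      rw [one_mul] at h2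
      exact ENNReal.Tendsto.div_const h2 (Or.inr hσ0)
    have hFatou : ∫⁻ x in Ω, G x ≤ Filter.liminf a Filter.atTop := by
      have h1 : ∫⁻ x in Ω, G x ≤ ∫⁻ x, Filter.liminf (fun m => Set.indicator {x | (l m * l m) • x ∈ K} G x) Filter.atTop := by
        rw [← lintegral_indicator hΩ.measurableSet]
        refine lintegral_mono fun x => ?_
        by_cases hx : x ∈ Ω
        · rw [Set.indicator_of_mem hx]
          have h2 : Filter.Tendsto (fun m => (l m * l m) • x) Filter.atTop (nhds ((1 * 1 : ℝ) • x)) :=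
            (hlt.mul hlt).smul_const x
          rw [one_mul, one_smul] at h2
          have h3 : ∀ᶠ m in Filter.atTop, Set.indicator {x | (l m * l m) • x ∈ K} G x = G x := by
            filter_upwards [h2.eventually (hΩ.mem_nhds hx)] with m hm
            have hm' : (l m * l m) • x ∈ K := subset_closure hm
            exact Set.indicator_of_mem (s := {x | (l m * l m) • x ∈ K}) hm' G
          rw [Filter.liminf_congr h3, Filter.liminf_const]
        · rw [Set.indicator_of_notMem hx]; exact zero_le
      refine h1.trans ((lintegral_liminf_le fun m => hGm.indicator (hSm m)).trans ?_)
      simp_rw [lintegral_indicator (hSm _)]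
      exact le_rfl
    have hfin : ∫⁻ x in Ω, G x ≤ C * (I + ENNReal.ofReal ε * σ) / σ :=
      hFatou.trans ((Filter.liminf_le_liminf hB).trans hBt.liminf_eq.le)
    exact (ENNReal.le_div_iff_mul_le (Or.inl hσ0) (Or.inl hσt)).1 hfin
  have hlim : Filter.Tendsto (fun m : ℕ => C * (I + ENNReal.ofReal (1 / ((m : ℝ) + 1)) * σ)) Filter.atTop (nhds (C * (I + 0 * σ))) := by
    refine ENNReal.Tendsto.const_mul ?_ (Or.inr hCt)
    refine Filter.Tendsto.const_add _ ?_
    refine ENNReal.Tendsto.mul_const ?_ (Or.inr hσt)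
    have := ENNReal.tendsto_ofReal (tendsto_one_div_add_atTop_nhds_zero_nat (𝕜 := ℝ))
    simpa using this
  rw [zero_mul, add_zero] at hlim
  exact ge_of_tendsto' hlim fun m => key _ (by positivity)


end HHsec11

lemma hh_main {n : ℕ} (hn : 0 < n) {Ω : Set (HHE n)} (hΩ : IsOpen Ω) (hb : Bornology.IsBounded Ω)
    (hc : Convex ℝ Ω) (hne : Ω.Nonempty) :
    μHE[n-1] (frontier Ω) ≠ ⊤ ∧ μHE[n-1] (frontier Ω) ≠ 0 ∧
      ∀ f : HHE n → ℝ, Continuous f → hhTD f Ω → (∀ x ∈ Ω, 0 ≤ laplacian f x) → (∀ x, 0 ≤ f x) →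
      (∫⁻ x in Ω, ENNReal.ofReal (f x)) * μHE[n-1] (frontier Ω) ≤
        ENNReal.ofReal 1.2 * (n * volume Ω) * ∫⁻ x in frontier Ω, ENNReal.ofReal (f x) ∂μHE[n-1] := by
  obtain ⟨x0, hx0⟩ := hne
  have hfrK : frontier (closure Ω) = frontier Ω := by
    have h1 : interior (closure Ω) = Ω := by
      rw [hc.interior_closure_eq_interior_of_nonempty_interior (by rw [hΩ.interior_eq]; exact ⟨x0, hx0⟩), hΩ.interior_eq]
    rw [frontier, frontier, closure_closure, h1, hΩ.interior_eq]
  have hvolK : volume (closure Ω) = volume Ω := by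
    refine le_antisymm ?_ (measure_mono subset_closure)
    have h1 : closure Ω ⊆ Ω ∪ frontier Ω := by
      rw [closure_eq_self_union_frontier]
    refine (measure_mono h1).trans ((measure_union_le _ _).trans ?_)
    rw [hc.addHaar_frontier volume, add_zero]
  let e : HHE n ≃ᵢ HHE n := IsometryEquiv.addRight x0
  have he : ∀ x, e x = x + x0 := fun x => rfl
  set Ω' : Set (HHE n) := e ⁻¹' Ω with hΩ'
  have hΩ'o : IsOpen Ω' := hΩ.preimage e.continuous
  have hΩ'b : Bornology.IsBounded Ω' := e.isometry.antilipschitz.isBounded_preimage hb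
  have hΩ'c : Convex ℝ Ω' := hc.translate_preimage_left x0
  have h0 : (0 : HHE n) ∈ Ω' := by
    change e 0 ∈ Ω
    rw [he, zero_add]; exact hx0
  have hcl : closure Ω' = e ⁻¹' (closure Ω) := (e.toHomeomorph.preimage_closure Ω).symm
  have hfr : frontier (closure Ω') = e ⁻¹' (frontier Ω) := by
    rw [hcl, ← hfrK]
    exact (e.toHomeomorph.preimage_frontier (closure Ω)).symm
  have hmp := e.measurePreserving_euclideanHausdorffMeasure (n-1)
  have hmpv : MeasurePreserving e volume volume := measurePreserving_add_right volume x0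
  obtain ⟨h1, h2, h3⟩ := hh_lim hn hΩ'o hΩ'b hΩ'c h0
  have hfm : MeasurableSet (frontier Ω) := isClosed_frontier.measurableSet
  rw [hfr, hmp.measure_preimage hfm.nullMeasurableSet] at h1 h2
  refine ⟨h1, h2, fun f hfc hf hsub hf0 => ?_⟩
  have h4 := h3 (fun x => f (x + x0)) (by fun_prop) (hhTD_shift hf x0 fun x hx => hx)
    (fun x hx => by rw [hh_lap_shift]; exact hsub _ hx) (fun x => hf0 _)
  have hGm : Measurable fun x => ENNReal.ofReal (f x) := hfc.measurable.ennreal_ofReal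
  have h5 := hmp.setLIntegral_comp_preimage hfm hGm
  have h6 := hmpv.setLIntegral_comp_preimage hΩ.measurableSet hGm
  simp only [he] at h5 h6
  rw [hfr, hmp.measure_preimage hfm.nullMeasurableSet, h5, h6, hcl,
    hmpv.measure_preimage isClosed_closure.measurableSet.nullMeasurableSet, hvolK] at h4
  exact h4


lemma hh_const {n : ℕ} (hn : 2 ≤ n) : 1.2 * (n : ℝ) ≤ ((n : ℝ) ^ 2 + n) / Real.sqrt ((n : ℝ) + 2) := by
  have h2 : (2 : ℝ) ≤ n := by exact_mod_cast hn
  rw [le_div_iff₀ (Real.sqrt_pos.2 (by linarith))]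
  have h1 : Real.sqrt ((n : ℝ) + 2) ≤ (n + 1) / 1.2 := by
    apply Real.sqrt_le_iff.2
    constructor
    · positivity
    · rw [div_pow, le_div_iff₀ (by norm_num)]
      nlinarith
  calc 1.2 * (n : ℝ) * Real.sqrt ((n : ℝ) + 2) ≤ 1.2 * (n : ℝ) * ((n + 1) / 1.2) := by gcongr
    _ = _ := by ring

lemma hh_ext {n : ℕ} {Ω : Set (HHE n)} (hΩ : IsOpen Ω) {f : HHE n → ℝ} (hfc : ContinuousOn f (closure Ω))
    (hfpos : ∀ x ∈ Ω, 0 < f x) (hf : hhTD f Ω) (hsub : ∀ x ∈ Ω, 0 ≤ laplacian f x) :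
    ∃ F : HHE n → ℝ, Continuous F ∧ (∀ x, 0 ≤ F x) ∧ (∀ x ∈ closure Ω, F x = f x) ∧ hhTD F Ω ∧
      ∀ x ∈ Ω, 0 ≤ laplacian F x := by
  obtain ⟨g, hg⟩ := ContinuousMap.exists_restrict_eq (isClosed_closure (s := Ω))
    (⟨(closure Ω).domRestrict f, continuousOn_iff_continuous_domRestrict.1 hfc⟩ : C(closure Ω, ℝ))
  have hgf : ∀ x ∈ closure Ω, g x = f x := fun x hx => by
    have := congrArg (fun k : C(closure Ω, ℝ) => k ⟨x, hx⟩) hg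
    exact this
  have hf0 : ∀ x ∈ closure Ω, 0 ≤ f x := by
    have h1 : ∀ x ∈ closure Ω, 0 ≤ g x := by
      have : closure Ω ⊆ {x | 0 ≤ g x} := closure_minimal (fun x hx => by
        have h2 := hfpos x hx
        rw [← hgf x (subset_closure hx)] at h2
        exact h2.le) (isClosed_le continuous_const g.continuous)
      exact this
    intro x hx
    rw [← hgf x hx]; exact h1 x hx
  have hFf : ∀ x ∈ closure Ω, max (g x) 0 = f x := fun x hx => by
    rw [hgf x hx, max_eq_left (hf0 x hx)]
  have hev : ∀ x ∈ Ω, (fun x => max (g x) 0) =ᶠ[nhds x] f := fun x hx => by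
    filter_upwards [hΩ.mem_nhds hx] with y hy
    exact hFf y (subset_closure hy)
  refine ⟨fun x => max (g x) 0, by fun_prop, fun x => le_max_right _ _, hFf, ⟨?_, ?_⟩, ?_⟩
  · intro x hx
    exact (hev x hx).differentiableAt_iff.2 (hf.1 x hx)
  · intro x hx
    have h1 : fderiv ℝ (fun x => max (g x) 0) =ᶠ[nhds x] fderiv ℝ f := (hev x hx).fderiv
    exact h1.differentiableAt_iff.2 (hf.2 x hx)
  · intro x hx
    have h1 : fderiv ℝ (fun x => max (g x) 0) =ᶠ[nhds x] fderiv ℝ f := (hev x hx).fderiv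
    have h2 : laplacian (fun x => max (g x) 0) x = laplacian f x := by
      unfold laplacian
      refine Finset.sum_congr rfl fun i _ => ?_
      have h3 : (fun y => fderiv ℝ (fun x => max (g x) 0) y (EuclideanSpace.single i (1 : ℝ))) =ᶠ[nhds x]
          fun y => fderiv ℝ f y (EuclideanSpace.single i (1 : ℝ)) := by
        filter_upwards [h1] with y hy
        rw [hy]
      rw [h3.fderiv_eq]
    rw [h2]; exact hsub x hx

/-- Hermite–Hadamard inequality for positive subharmonic functions on convex domains,
even-dimensional case, with constant `(n² + n)/√(n + 2)`. -/
theorem hermite_hadamard_subharmonic_even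
    (n : ℕ) (hn : Even n) (hn0 : 0 < n)
    (Ω : Set (EuclideanSpace ℝ (Fin n)))
    (hΩo : IsOpen Ω) (hΩb : Bornology.IsBounded Ω)
    (hΩc : Convex ℝ Ω) (hΩne : (interior Ω).Nonempty)
    (f : EuclideanSpace ℝ (Fin n) → ℝ)
    (hfc : ContinuousOn f (closure Ω))
    (hfpos : ∀ x ∈ Ω, 0 < f x)
    (hf1 : ∀ x ∈ Ω, DifferentiableAt ℝ f x)
    (hf2 : ∀ x ∈ Ω, DifferentiableAt ℝ (fun y => fderiv ℝ f y) x)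
    (hsub : ∀ x ∈ Ω, 0 ≤ laplacian f x) :
    (1 / (volume Ω).toReal) * ∫ x in Ω, f x ≤
      (((n : ℝ) ^ 2 + n) / Real.sqrt ((n : ℝ) + 2)) *
        ((1 / (μH[(n : ℝ) - 1] (frontier Ω)).toReal) *
          ∫ x in frontier Ω, f x ∂μH[(n : ℝ) - 1]) := by
  have hn2 : 2 ≤ n := by
    obtain ⟨k, rfl⟩ := hn
    omega
  rw [hΩo.interior_eq] at hΩne
  obtain ⟨F, hFc, hF0, hFf, hFTD, hFsub⟩ := hh_ext hΩo hfc hfpos ⟨hf1, hf2⟩ hsub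
  have hcast : (n : ℝ) - 1 = ((n - 1 : ℕ) : ℝ) := by
    rw [Nat.cast_sub (by omega)]; simp
  have hI1 : ∫ x in Ω, f x = ∫ x in Ω, F x :=
    setIntegral_congr_fun hΩo.measurableSet fun x hx => (hFf x (subset_closure hx)).symm
  have hI2 : ∫ x in frontier Ω, f x ∂μH[(n : ℝ) - 1] = ∫ x in frontier Ω, F x ∂μH[(n : ℝ) - 1] :=
    setIntegral_congr_fun isClosed_frontier.measurableSet fun x hx => (hFf x (frontier_subset_closure hx)).symm
  rw [hI1, hI2, hcast]
  obtain ⟨h1, h2, h3⟩ := hh_main hn0 hΩo hΩb hΩc hΩne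
  have h4 := h3 F hFc hFTD hFsub hF0
  have hcne := Measure.addHaarScalarFactor_volume_hausdorffMeasure_ne_zero (n - 1)
  rw [Measure.euclideanHausdorffMeasure_def] at h1 h2 h4
  set k := Measure.addHaarScalarFactor (volume : Measure (EuclideanSpace ℝ (Fin (n-1)))) μH[((n - 1 : ℕ) : ℝ)] with hk
  set μ : Measure (EuclideanSpace ℝ (Fin n)) := μH[((n - 1 : ℕ) : ℝ)] with hμ
  have hkμ : k • μ = (k : ENNReal) • μ := rfl
  have hk0 : (k : ENNReal) ≠ 0 := by simpa using hcne
  rw [hkμ, Measure.smul_apply, smul_eq_mul] at h1 h2 h4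
  rw [Measure.restrict_smul, lintegral_smul_measure, smul_eq_mul] at h4
  have hμt : μ (frontier Ω) ≠ ⊤ := fun ht => by
    rw [ht, ENNReal.mul_top hk0] at h1; exact h1 rfl
  have hμ0 : μ (frontier Ω) ≠ 0 := fun ht => by
    rw [ht, mul_zero] at h2; exact h2 rfl
  set A := ∫⁻ x in Ω, ENNReal.ofReal (F x) with hA
  set I := ∫⁻ x in frontier Ω, ENNReal.ofReal (F x) ∂μ with hI
  have h5 : A * μ (frontier Ω) ≤ ENNReal.ofReal 1.2 * (n * volume Ω) * I := by
    have h6 : (k : ENNReal) * (A * μ (frontier Ω)) ≤ k * (ENNReal.ofReal 1.2 * (n * volume Ω) * I) := by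
      calc (k : ENNReal) * (A * μ (frontier Ω)) = A * (k * μ (frontier Ω)) := by ring
        _ ≤ _ := h4
        _ = _ := by ring
    exact (ENNReal.mul_le_mul_iff_right hk0 ENNReal.coe_ne_top).1 h6
  have hIt : I ≠ ⊤ := by
    have hcomp : IsCompact (frontier Ω) :=
      Metric.isCompact_of_isClosed_isBounded isClosed_frontier (hΩb.closure.subset frontier_subset_closure)
    obtain ⟨M, hM⟩ := hcomp.bddAbove_image (f := F) hFc.continuousOn
    have : I ≤ ∫⁻ x in frontier Ω, ENNReal.ofReal M ∂μ :=
      setLIntegral_mono measurable_const fun x hx => ENNReal.ofReal_le_ofReal (hM ⟨x, hx, rfl⟩)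
    refine (this.trans_lt ?_).ne
    rw [setLIntegral_const]
    exact ENNReal.mul_lt_top (by simp) hμt.lt_top
  have hVt : volume Ω ≠ ⊤ := hΩb.measure_lt_top.ne
  have hV0 : 0 < (volume Ω).toReal := ENNReal.toReal_pos (hΩo.measure_pos volume hΩne).ne' hVt
  have hs0 : 0 < (μ (frontier Ω)).toReal := ENNReal.toReal_pos hμ0 hμt
  have hAr : ∫ x in Ω, F x = A.toReal :=
    integral_eq_lintegral_of_nonneg_ae (Filter.Eventually.of_forall hF0) hFc.aestronglyMeasurable
  have hIr : ∫ x in frontier Ω, F x ∂μ = I.toReal :=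
    integral_eq_lintegral_of_nonneg_ae (Filter.Eventually.of_forall hF0) hFc.aestronglyMeasurable
  have h7 := ENNReal.toReal_mono (ENNReal.mul_ne_top (ENNReal.mul_ne_top (by simp)
    (ENNReal.mul_ne_top (by simp) hVt)) hIt) h5
  simp only [ENNReal.toReal_mul, ENNReal.toReal_natCast] at h7
  rw [ENNReal.toReal_ofReal (by norm_num)] at h7
  rw [hAr, hIr]
  have hc := hh_const hn2
  have hIn : 0 ≤ I.toReal := ENNReal.toReal_nonneg
  calc 1 / (volume Ω).toReal * A.toReal
      = (A.toReal * (μ (frontier Ω)).toReal) / ((volume Ω).toReal * (μ (frontier Ω)).toReal) := by field_simp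
    _ ≤ (1.2 * (n * (volume Ω).toReal) * I.toReal) / ((volume Ω).toReal * (μ (frontier Ω)).toReal) := by gcongr
    _ = 1.2 * n * (1 / (μ (frontier Ω)).toReal * I.toReal) := by field_simp
    _ ≤ _ := by gcongr
end

section
/- Let Ω₁, Ω₂ ⊂ ℝⁿ be bounded open convex sets with nonempty interior such that Ω₂ ⊆ Ω₁. Then (|∂Ω₁|/|Ω₁|) · (|Ω₂|/|∂Ω₂|) ≤ n. -/
open MeasureTheory

abbrev EE (m : ℕ) := EuclideanSpace ℝ (Fin (m + 1))

lemma vol_slice {m : ℕ} (u : EE m) (hu : ‖u‖ = 1) {t : Set (EE m)} (ht : MeasurableSet t) :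
    volume t = ∫⁻ x : ℝ, μHE[m] (t ∩ {y | inner ℝ u y = x}) := by
  have hu0 : u ≠ 0 := by
    intro h; simp [h] at hu
  have h1 := EuclideanGeometry.euclideanHausdorffMeasure_eq_lintegral (0 : EE m) hu0 ht
  rw [InnerProductSpace.euclideanHausdorffMeasure_eq_volume] at h1
  have hr : Module.finrank ℝ (EE m) - 1 = m := by simp
  have he : ‖u‖ₑ = 1 := by simp [enorm_eq_nnnorm, ← NNReal.coe_eq_one, hu]
  rw [hr, he, one_mul] at h1
  rw [h1]
  congr with x
  congr with y
  simp only [SetLike.mem_coe, AffineSubspace.mem_mk', Set.mem_ofPred_eq,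
    Submodule.mem_orthogonal_singleton_iff_inner_right]
  simp [inner_sub_right, inner_smul_right, hu, sub_eq_zero]

lemma slab_vol {m : ℕ} (u : EE m) (hu : ‖u‖ = 1) (h R : ℝ) {F : Set (EE m)}
    (hF : MeasurableSet F) :
    volume {x : EE m | inner ℝ u x ∈ Set.Icc (h - R) h ∧ x + (h - inner ℝ u x) • u ∈ F}
      ≤ ENNReal.ofReal R * μHE[m] F := by
  have hm : MeasurableSet
      {x : EE m | inner ℝ u x ∈ Set.Icc (h - R) h ∧ x + (h - inner ℝ u x) • u ∈ F} := by
    apply MeasurableSet.inter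
    · exact measurableSet_preimage (by fun_prop) measurableSet_Icc
    · have : Measurable (fun x : EE m => x + (h - inner ℝ u x) • u) := by fun_prop
      exact this hF
  rw [vol_slice u hu hm]
  calc _ ≤ ∫⁻ x : ℝ, (Set.Icc (h - R) h).indicator (fun _ => μHE[m] F) x := by
        apply lintegral_mono
        intro s
        by_cases hs : s ∈ Set.Icc (h - R) h
        · simp only [Set.indicator_of_mem hs]
          have hi : Isometry (fun x : EE m => x + (h - s) • u) := isometry_add_right _
          rw [← hi.euclideanHausdorffMeasure_image]
          apply measure_mono
          rintro _ ⟨x, ⟨⟨_, h2⟩, h3⟩, rfl⟩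
          simp only [Set.mem_ofPred_eq] at h3
          simpa [h3] using h2
        · simp only [Set.indicator_of_notMem hs]
          rw [nonpos_iff_eq_zero, ← measure_empty (μ := (μHE[m] : Measure (EE m)))]
          congr 1
          ext x
          simp only [Set.mem_inter_iff, Set.mem_ofPred_eq, Set.mem_empty_iff_false, iff_false]
          rintro ⟨⟨h1, _⟩, rfl⟩
          exact hs h1
    _ = _ := by
        rw [lintegral_indicator measurableSet_Icc, lintegral_const, mul_comm]
        simp

open scoped Pointwise in
lemma cone_vol {m : ℕ} (u : EE m) (hu : ‖u‖ = 1) (h : ℝ) (hh : 0 < h) {F : Set (EE m)}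
    (hF : MeasurableSet F) (hFh : ∀ y ∈ F, inner ℝ u y = h) :
    ENNReal.ofReal h * μHE[m] F ≤ ((m + 1 : ℕ) : ENNReal) *
    volume {x : EE m | inner ℝ u x ∈ Set.Ioo 0 h ∧ (h / inner ℝ u x) • x ∈ F} := by
  have hm : MeasurableSet
      {x : EE m | inner ℝ u x ∈ Set.Ioo 0 h ∧ (h / inner ℝ u x) • x ∈ F} := by
    apply MeasurableSet.inter
    · exact measurableSet_preimage (by fun_prop) measurableSet_Ioo
    · have : Measurable (fun x : EE m => (h / inner ℝ u x) • x) := by fun_prop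
      exact this hF
  rw [vol_slice u hu hm]
  have key : ∫⁻ x : ℝ, (Set.Ioo 0 h).indicator (fun s => ENNReal.ofReal ((s / h) ^ m)) x
      = ENNReal.ofReal (h / (m + 1)) := by
    rw [lintegral_indicator measurableSet_Ioo, restrict_Ioo_eq_restrict_Ioc,
      ← ofReal_integral_eq_lintegral_ofReal, ← intervalIntegral.integral_of_le hh.le]
    · congr 1
      simp only [div_pow]
      rw [intervalIntegral.integral_div, integral_pow]
      field_simp
      simp [pow_succ]
    · exact (Continuous.integrableOn_Icc (by fun_prop)).mono_set Set.Ioc_subset_Icc_self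
    · filter_upwards [ae_restrict_mem measurableSet_Ioc] with x hx
      have := hx.1
      positivity
  calc ENNReal.ofReal h * μHE[m] F = ((m + 1 : ℕ) : ENNReal) *
        (ENNReal.ofReal (h / (m + 1)) * μHE[m] F) := by
        rw [← mul_assoc, ← ENNReal.ofReal_natCast, ← ENNReal.ofReal_mul (by positivity)]
        congr 2
        push_cast
        field_simp
    _ ≤ _ := by
        gcongr
        rw [← key, ← lintegral_mul_const]
        swap
        · exact Measurable.indicator (by fun_prop) measurableSet_Ioo
        apply lintegral_mono
        intro s
        by_cases hs : s ∈ Set.Ioo 0 h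
        · simp only [Set.indicator_of_mem hs]
          have hs0 := hs.1
          have hne : s / h ≠ 0 := by positivity
          have h2 := Measure.euclideanHausdorffMeasure_smul₀ m hne F
          have h3 : ENNReal.ofReal ((s / h) ^ m) * μHE[m] F = μHE[m] ((s/h) • F) := by
            rw [h2, ENNReal.smul_def, smul_eq_mul]
            congr 1
            rw [ENNReal.ofReal, ENNReal.coe_inj, Real.toNNReal_pow (by positivity)]
            congr 1
            rw [← NNReal.coe_inj]
            simp only [coe_nnnorm, Real.norm_eq_abs]
            rw [Real.coe_toNNReal _ (by positivity), abs_of_nonneg (by positivity)]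
          rw [h3]
          apply measure_mono
          rintro _ ⟨y, hy, rfl⟩
          have hy' := hFh y hy
          have h4 : inner ℝ u ((s / h) • y) = s := by
            rw [inner_smul_right, hy']; field_simp
          refine ⟨⟨by simpa [h4] using hs, ?_⟩, h4⟩
          simp only [h4, smul_smul]
          rw [show h / s * (s / h) = 1 by field_simp, one_smul]
          exact hy
        · simp [Set.indicator_of_notMem hs]

lemma preconn_subset {X : Type*} [TopologicalSpace X] {c U : Set X} (hc : IsPreconnected c)
    (hd : Disjoint c (frontier U)) (hne : (c ∩ U).Nonempty) : c ⊆ U := by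
  by_contra hcon
  obtain ⟨z, hz, hzU⟩ := Set.not_subset.1 hcon
  have h1 : c ⊆ interior U ∪ (closure U)ᶜ := by
    intro y hy
    by_contra h
    simp only [Set.mem_union, Set.mem_compl_iff, not_or, not_not] at h
    exact Set.disjoint_left.1 hd hy ⟨h.2, h.1⟩
  obtain ⟨x, hx, hxU⟩ := hne
  have h2 : (c ∩ interior U).Nonempty := by
    refine ⟨x, hx, ?_⟩
    rcases h1 hx with h | h
    · exact h
    · exact absurd (subset_closure hxU) h
  have h3 : (c ∩ (closure U)ᶜ).Nonempty := by
    refine ⟨z, hz, ?_⟩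
    rcases h1 hz with h | h
    · exact absurd (interior_subset h) hzU
    · exact h
  obtain ⟨w, _, hw1, hw2⟩ := hc _ _ isOpen_interior isClosed_closure.isOpen_compl h1 h2 h3
  exact hw2 (subset_closure (interior_subset hw1))

/-- perimeter monotonicity -/
lemma perim_mono {m : ℕ} {Ω Q : Set (EE m)} (ho : IsOpen Ω) (hc : Convex ℝ Ω)
    (hQ : closure Ω ⊆ Q) (hb : Bornology.IsBounded Q) :
    μHE[m] (frontier Ω) ≤ μHE[m] (frontier Q) := by
  have key : ∀ y ∈ frontier Ω, ∃ z ∈ frontier Q, ∀ w ∈ closure Ω, inner ℝ (z - y) (w - y) ≤ 0 := by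
    intro y hy
    have hyn : y ∉ Ω := by
      rw [ho.frontier_eq] at hy
      exact hy.2
    obtain ⟨f, hf⟩ := geometric_hahn_banach_open_point hc ho hyn
    let v := (InnerProductSpace.toDual ℝ (EE m)).symm f
    have hv : ∀ x, inner ℝ v x = f x := fun x => by simp [v]
    obtain ⟨a, ha⟩ : Ω.Nonempty := closure_nonempty_iff.1 ⟨y, hy.1⟩
    have hv0 : v ≠ 0 := by
      intro h
      have h1 := hf a ha
      rw [← hv, ← hv, h] at h1
      simp at h1
    have hcl : ∀ w ∈ closure Ω, inner ℝ v (w - y) ≤ 0 := by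
      intro w hw
      have : closure Ω ⊆ {w | inner ℝ v (w - y) ≤ 0} := by
        apply closure_minimal
        · intro w hw
          simp only [Set.mem_ofPred_eq]
          rw [inner_sub_right, hv, hv]
          linarith [hf w hw]
        · exact isClosed_le (by fun_prop) continuous_const
      exact this hw
    let ray := (fun s : ℝ => y + s • v) '' Set.Ici 0
    have hray : IsPreconnected ray := isPreconnected_Ici.image _ (by fun_prop)
    have hmeet : ¬ Disjoint ray (frontier Q) := by
      intro hd
      have hsub := preconn_subset hray hd ⟨y, ⟨0, by simp⟩, hQ hy.1⟩
      obtain ⟨C, hC⟩ := hb.exists_norm_le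
      have hvp : 0 < ‖v‖ := norm_pos_iff.2 hv0
      have hCy := hC y (hQ hy.1)
      have hC0 : 0 ≤ C := (norm_nonneg _).trans hCy
      have h1 := hC (y + ((2 * C + 1) / ‖v‖) • v)
        (hsub ⟨(2 * C + 1) / ‖v‖, by simp only [Set.mem_Ici]; positivity, rfl⟩)
      have h2 : ‖((2 * C + 1) / ‖v‖) • v‖ = 2 * C + 1 := by
        rw [norm_smul, Real.norm_of_nonneg (by positivity)]; field_simp
      have h3 := norm_sub_le (y + ((2 * C + 1) / ‖v‖) • v) y
      rw [add_sub_cancel_left, h2] at h3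
      linarith
    obtain ⟨z, ⟨s, hs, rfl⟩, hz⟩ := Set.not_disjoint_iff.1 hmeet
    refine ⟨_, hz, fun w hw => ?_⟩
    simp only [add_sub_cancel_left, inner_smul_left]
    exact mul_nonpos_of_nonneg_of_nonpos hs (hcl w hw)
  choose! g hg1 hg2 using key
  have hexp : ∀ y ∈ frontier Ω, ∀ y' ∈ frontier Ω, dist y y' ≤ dist (g y) (g y') := by
    intro y hy y' hy'
    have h1 := hg2 y hy y' hy'.1
    have h2 := hg2 y' hy' y hy.1
    rw [dist_eq_norm, dist_eq_norm]
    by_cases h0 : ‖y - y'‖ = 0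
    · rw [h0]; positivity
    have h0' : 0 < ‖y - y'‖ := lt_of_le_of_ne (norm_nonneg _) (Ne.symm h0)
    have h3 : ‖y - y'‖ * ‖y - y'‖ ≤ inner ℝ (g y - g y') (y - y') := by
      rw [← real_inner_self_eq_norm_mul_norm]
      have e1 : g y - g y' = (g y - y) - (g y' - y') + (y - y') := by abel
      rw [e1, inner_add_left, inner_sub_left (g y - y)]
      have e2 : inner ℝ (g y - y) (y - y') = - inner ℝ (g y - y) (y' - y) := by
        rw [← inner_neg_right, neg_sub]
      linarith
    have h4 := real_inner_le_norm (g y - g y') (y - y')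
    exact le_of_mul_le_mul_right (h3.trans h4) h0'
  have hinj : Set.InjOn g (frontier Ω) := by
    intro y hy y' hy' h
    have := hexp y hy y' hy'
    rw [h, dist_self] at this
    exact dist_le_zero.1 this
  have hL : LipschitzOnWith 1 (Function.invFunOn g (frontier Ω)) (g '' frontier Ω) := by
    apply LipschitzOnWith.of_dist_le_mul
    rintro _ ⟨y, hy, rfl⟩ _ ⟨y', hy', rfl⟩
    rw [hinj.leftInvOn_invFunOn hy, hinj.leftInvOn_invFunOn hy']
    simpa using hexp y hy y' hy'
  have h5 := hL.hausdorffMeasure_image_le (d := m) (by positivity)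
  have h6 : Function.invFunOn g (frontier Ω) '' (g '' frontier Ω) = frontier Ω := by
    exact hinj.leftInvOn_invFunOn.image_image
  rw [h6] at h5
  simp only [ENNReal.coe_one, ENNReal.one_rpow, one_mul] at h5
  have h7 : g '' frontier Ω ⊆ frontier Q := by
    rintro _ ⟨y, hy, rfl⟩; exact hg1 y hy
  have h8 := h5.trans (measure_mono h7)
  simp only [Measure.euclideanHausdorffMeasure_def, Measure.smul_apply]
  gcongr

/-- polytope approximation -/
lemma exists_polytope {m : ℕ} {K U : Set (EE m)} (hK : IsCompact K) (hKc : Convex ℝ K)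
    (hKne : K.Nonempty) (hU : IsOpen U) (hUb : Bornology.IsBounded U) (hKU : K ⊆ U) :
    ∃ (N : ℕ) (u : Fin N → EE m) (h : Fin N → ℝ), (∀ i, ‖u i‖ = 1) ∧
      (∀ i j, u i = u j → h i = h j → i = j) ∧
      (∀ x ∈ K, ∀ i, inner ℝ (u i) x < h i) ∧
      {x | ∀ i, inner ℝ (u i) x ≤ h i} ⊆ U := by
  have key : ∀ y ∈ frontier U, ∃ p : EE m × ℝ, ‖p.1‖ = 1 ∧ (∀ x ∈ K, inner ℝ p.1 x < p.2) ∧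
      p.2 < inner ℝ p.1 y := by
    intro y hy
    have hyK : y ∉ K := fun h => by
      rw [hU.frontier_eq] at hy
      exact hy.2 (hKU h)
    obtain ⟨f, c, h1, h2⟩ := geometric_hahn_banach_closed_point hKc hK.isClosed hyK
    let v := (InnerProductSpace.toDual ℝ (EE m)).symm f
    have hv : ∀ x, inner ℝ v x = f x := fun x => by simp [v]
    obtain ⟨a, ha⟩ := hKne
    have hv0 : v ≠ 0 := by
      intro h
      have h3 := (h1 a ha).trans h2
      rw [← hv, ← hv, h] at h3
      simp at h3
    have hvp : 0 < ‖v‖ := norm_pos_iff.2 hv0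
    refine ⟨(‖v‖⁻¹ • v, ‖v‖⁻¹ * c), ?_, ?_, ?_⟩
    · simp only [norm_smul, norm_inv, norm_norm]; field_simp
    · intro x hx
      simp only [real_inner_smul_left, hv]
      have := h1 x hx
      gcongr
    · simp only [real_inner_smul_left, hv]
      gcongr
  choose! p hp1 hp2 hp3 using key
  have hcomp : IsCompact (frontier U) :=
    Metric.isCompact_of_isClosed_isBounded isClosed_frontier
      (hUb.closure.subset frontier_subset_closure)
  obtain ⟨t, ht, htc⟩ := hcomp.elim_nhds_subcover
    (fun y => {x | (p y).2 < inner ℝ (p y).1 x})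
    (fun y hy => (isOpen_lt continuous_const (by fun_prop)).mem_nhds (hp3 y hy))
  classical
  let s : Finset (EE m × ℝ) := t.image p
  have hs : ∀ q ∈ s, ∃ y ∈ frontier U, p y = q := by
    intro q hq
    obtain ⟨y, hy, rfl⟩ := Finset.mem_image.1 hq
    exact ⟨y, ht y hy, rfl⟩
  let e := s.equivFin.symm
  refine ⟨s.card, fun i => (e i).1.1, fun i => (e i).1.2, ?_, ?_, ?_, ?_⟩
  · intro i
    obtain ⟨y, hy, h⟩ := hs _ (e i).2
    simp only [← h]; exact hp1 y hy
  · intro i j h1 h2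
    apply e.injective
    exact Subtype.ext (Prod.ext h1 h2)
  · intro x hx i
    obtain ⟨y, hy, h⟩ := hs _ (e i).2
    simp only [← h]; exact hp2 y hy x hx
  · apply preconn_subset
    · apply Convex.isPreconnected
      rw [Set.ofPred_forall]
      apply convex_iInter
      intro i
      exact convex_halfSpace_le (f := fun x => inner ℝ (e i).1.1 x)
        ⟨fun x y => inner_add_right _ _ _, fun c x => by simp [inner_smul_right]⟩ _
    · rw [Set.disjoint_left]
      intro x hx hxf
      obtain ⟨y, hy, hxy⟩ := Set.mem_iUnion₂.1 (htc hxf)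
      have h1 := hx (s.equivFin ⟨p y, Finset.mem_image_of_mem _ hy⟩)
      simp only [e, Equiv.symm_apply_apply] at h1
      exact absurd hxy (not_lt.2 h1)
    · obtain ⟨a, ha⟩ := hKne
      refine ⟨a, fun i => ?_, hKU ha⟩
      obtain ⟨y, hy, h⟩ := hs _ (e i).2
      simp only [← h]; exact (hp2 y hy a ha).le

lemma continuous_inner_left' {m : ℕ} (u : EE m) : Continuous (fun x : EE m => inner ℝ u x) := by
  fun_prop

lemma poly_b {m N : ℕ} (u : Fin N → EE m) (h : Fin N → ℝ) (hu : ∀ i, ‖u i‖ = 1)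
    (hinj : ∀ i j, u i = u j → h i = h j → i = j) {R : ℝ}
    (hR : ∀ x t, Metric.ball x t ⊆ {x : EE m | ∀ i, inner ℝ (u i) x < h i} → t ≤ R) :
    volume {x : EE m | ∀ i, inner ℝ (u i) x < h i} ≤
      ENNReal.ofReal R * μHE[m] (frontier {x : EE m | ∀ i, inner ℝ (u i) x < h i}) := by
  set P := {x : EE m | ∀ i, inner ℝ (u i) x < h i} with hP
  have hPo : IsOpen P := by
    rw [hP, Set.ofPred_forall]
    exact isOpen_iInter_of_finite fun i => isOpen_lt (by fun_prop) continuous_const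
  let F : Fin N → Set (EE m) := fun i =>
    {y | inner ℝ (u i) y = h i ∧ ∀ j, j ≠ i → inner ℝ (u j) y < h j}
  have hFm : ∀ i, MeasurableSet (F i) := by
    intro i
    apply MeasurableSet.inter
    · exact (isClosed_eq (by fun_prop) continuous_const).measurableSet
    · change MeasurableSet {y : EE m | ∀ j, j ≠ i → inner ℝ (u j) y < h j}
      simp only [Set.ofPred_forall]
      refine MeasurableSet.iInter fun j => MeasurableSet.iInter fun _ => ?_
      exact (isOpen_lt (by fun_prop) continuous_const).measurableSet
  have hFd : Pairwise (Function.onFun Disjoint F) := by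
    intro i j hij
    rw [Function.onFun, Set.disjoint_left]
    intro y hy hy'
    exact absurd hy'.1 (hy.2 j hij.symm).ne
  have hcover : P ⊆ ⋃ i, {x : EE m | inner ℝ (u i) x ∈ Set.Icc (h i - R) (h i) ∧
      x + (h i - inner ℝ (u i) x) • u i ∈ F i} := by
    intro x hx
    rcases isEmpty_or_nonempty (Fin N) with hN | hN
    · have := hR x (R + 1) (fun y _ i => hN.elim i)
      linarith
    obtain ⟨i, hi⟩ := Finite.exists_min (fun i => h i - inner ℝ (u i) x)
    have hpos : 0 < h i - inner ℝ (u i) x := sub_pos.2 (hx i)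
    have hin : ∀ j, ∀ v : EE m, inner ℝ (u j) v ≤ ‖v‖ := fun j v => by
      simpa [hu j] using real_inner_le_norm (u j) v
    have hle : h i - inner ℝ (u i) x ≤ R := by
      apply hR x
      intro y hy j
      rw [Metric.mem_ball, dist_eq_norm] at hy
      have h1 := hin j (y - x)
      rw [inner_sub_right] at h1
      have h2 := hi j
      linarith
    refine Set.mem_iUnion.2 ⟨i, ⟨⟨by linarith, (hx i).le⟩, ?_, ?_⟩⟩
    · rw [inner_add_right, inner_smul_right, real_inner_self_eq_norm_sq, hu i]; ring
    · intro j hj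
      rw [inner_add_right, inner_smul_right]
      have h2 := hi j
      by_cases he : u j = u i
      · rw [he] at h2 ⊢
        rw [real_inner_self_eq_norm_sq, hu i]
        have : h i ≠ h j := fun hh => hj (hinj j i he hh.symm)
        have : h i < h j := lt_of_le_of_ne (by linarith) this
        linarith
      · have h3 : inner ℝ (u j) (u i) < 1 := by
          exact inner_lt_one_iff_real_of_norm_eq_one (hu j) (hu i) |>.2 he
        nlinarith
  have hFP : (⋃ i, F i) ⊆ frontier P := by
    intro y hy
    obtain ⟨i, hy1, hy2⟩ := Set.mem_iUnion.1 hy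
    rw [hPo.frontier_eq]
    refine ⟨?_, fun hyP => absurd hy1 (hyP i).ne⟩
    have ht : Filter.Tendsto (fun t : ℝ => y - t • u i) (nhdsWithin 0 (Set.Ioi 0)) (nhds y) := by
      have : Continuous (fun t : ℝ => y - t • u i) := by fun_prop
      simpa using (this.tendsto 0).mono_left nhdsWithin_le_nhds
    refine mem_closure_of_tendsto ht ?_
    have h1 : ∀ j, ∀ᶠ t : ℝ in nhdsWithin 0 (Set.Ioi 0), inner ℝ (u j) (y - t • u i) < h j := by
      intro j
      by_cases hj : j = i
      · subst hj
        filter_upwards [self_mem_nhdsWithin] with t ht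
        rw [inner_sub_right, inner_smul_right, real_inner_self_eq_norm_sq, hu j, hy1]
        simp only [Set.mem_Ioi] at ht
        linarith
      · have h3 : IsOpen {x : EE m | inner ℝ (u j) x < h j} :=
          isOpen_lt (by fun_prop) continuous_const
        exact ht (h3.mem_nhds (hy2 j hj))
    exact Filter.eventually_all.2 h1
  calc volume P ≤ ∑ i, volume {x : EE m | inner ℝ (u i) x ∈ Set.Icc (h i - R) (h i) ∧
      x + (h i - inner ℝ (u i) x) • u i ∈ F i} :=
        (measure_mono hcover).trans (measure_iUnion_fintype_le _ _)
    _ ≤ ∑ i, ENNReal.ofReal R * μHE[m] (F i) :=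
        Finset.sum_le_sum fun i _ => slab_vol (u i) (hu i) (h i) R (hFm i)
    _ = ENNReal.ofReal R * μHE[m] (⋃ i, F i) := by
        rw [← Finset.mul_sum, measure_iUnion hFd hFm, tsum_fintype]
    _ ≤ _ := by gcongr

lemma poly_a {m N : ℕ} (u : Fin N → EE m) (h : Fin N → ℝ) (hu : ∀ i, ‖u i‖ = 1)
    {r : ℝ} (hr : 0 < r) (hrh : ∀ i, r ≤ h i) :
    ENNReal.ofReal r * μHE[m] (frontier {x : EE m | ∀ i, inner ℝ (u i) x < h i}) ≤
      ((m + 1 : ℕ) : ENNReal) * volume {x : EE m | ∀ i, inner ℝ (u i) x < h i} := by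
  set P := {x : EE m | ∀ i, inner ℝ (u i) x < h i} with hP
  have hPo : IsOpen P := by
    rw [hP, Set.ofPred_forall]
    exact isOpen_iInter_of_finite fun i => isOpen_lt (by fun_prop) continuous_const
  let Q := {x : EE m | ∀ i, inner ℝ (u i) x ≤ h i}
  have hQc : IsClosed Q := by
    simp only [Q, Set.ofPred_forall]
    exact isClosed_iInter fun i => isClosed_le (by fun_prop) continuous_const
  let G : Fin N → Set (EE m) := fun i => Q ∩ {y | inner ℝ (u i) y = h i}
  let F : Fin N → Set (EE m) := fun i => G i \ ⋃ j, ⋃ (_ : j < i), G j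
  have hGm : ∀ i, MeasurableSet (G i) := fun i =>
    (hQc.inter (isClosed_eq (by fun_prop) continuous_const)).measurableSet
  have hFm : ∀ i, MeasurableSet (F i) := fun i =>
    (hGm i).diff (MeasurableSet.iUnion fun j => MeasurableSet.iUnion fun _ => hGm j)
  have hFcov : frontier P ⊆ ⋃ i, F i := by
    intro y hy
    rw [hPo.frontier_eq] at hy
    have hyQ : y ∈ Q := closure_minimal (fun x hx i => (hx i).le) hQc hy.1
    have hex : ∃ i, y ∈ G i := by
      by_contra hcon
      push Not at hcon
      exact hy.2 fun i => lt_of_le_of_ne (hyQ i) fun he => hcon i ⟨hyQ, he⟩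
    obtain ⟨i, hi⟩ := hex
    obtain ⟨k, hk1, hk2⟩ := WellFounded.has_min (wellFounded_lt : WellFounded ((· < ·) : Fin N → _ → Prop))
      {i | y ∈ G i} ⟨i, hi⟩
    refine Set.mem_iUnion.2 ⟨k, hk1, ?_⟩
    simp only [Set.mem_iUnion, not_exists]
    exact fun j hj hyj => hk2 j hyj hj
  let C : Fin N → Set (EE m) := fun i =>
    {x : EE m | inner ℝ (u i) x ∈ Set.Ioo 0 (h i) ∧ (h i / inner ℝ (u i) x) • x ∈ F i}
  have hCm : ∀ i, MeasurableSet (C i) := by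
    intro i
    apply MeasurableSet.inter
    · exact measurableSet_preimage (by fun_prop) measurableSet_Ioo
    · have : Measurable (fun x : EE m => (h i / inner ℝ (u i) x) • x) := by fun_prop
      exact this (hFm i)
  -- each point of a cone is `s • y`
  have hC : ∀ i, ∀ x ∈ C i, ∃ c : ℝ, 1 < c ∧ c • x ∈ F i := by
    intro i x hx
    exact ⟨_, (one_lt_div hx.1.1).2 hx.1.2, hx.2⟩
  have hCP : (⋃ i, C i) ⊆ P := by
    intro x hx
    obtain ⟨i, hx⟩ := Set.mem_iUnion.1 hx
    obtain ⟨c, hc, hcF⟩ := hC i x hx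
    intro j
    have h1 := hcF.1.1 j
    rw [inner_smul_right] at h1
    have h2 := hrh j
    by_contra hcon
    push Not at hcon
    nlinarith
  have huniq : ∀ (x : EE m) (i j : Fin N) (c d : ℝ), 1 < c → 1 < d → c • x ∈ G i → d • x ∈ G j →
      d ≤ c := by
    intro x i j c d hc hd h1 h2
    have h3 := h2.1 i
    have h4 : inner ℝ (u i) (c • x) = h i := h1.2
    rw [inner_smul_right] at h3 h4
    have h5 := hrh i
    have h6 : 0 < inner ℝ (u i) x := by
      by_contra hcon
      push Not at hcon
      nlinarith
    rw [← h4] at h3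
    exact le_of_mul_le_mul_right h3 h6
  have hCd : Pairwise (Function.onFun Disjoint C) := by
    have aux : ∀ i j, i < j → Disjoint (C i) (C j) := by
      intro i j hij
      rw [Set.disjoint_left]
      intro x hx hx'
      obtain ⟨c, hc, hcF⟩ := hC i x hx
      obtain ⟨d, hd, hdF⟩ := hC j x hx'
      have : c = d := le_antisymm (huniq x j i d c hd hc hdF.1 hcF.1)
        (huniq x i j c d hc hd hcF.1 hdF.1)
      subst this
      exact hdF.2 (Set.mem_iUnion₂.2 ⟨i, hij, hcF.1⟩)
    intro i j hij
    rcases lt_or_gt_of_ne hij with h1 | h1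
    · exact aux i j h1
    · exact (aux j i h1).symm
  calc ENNReal.ofReal r * μHE[m] (frontier P)
      ≤ ENNReal.ofReal r * ∑ i, μHE[m] (F i) := by
        gcongr
        exact (measure_mono hFcov).trans (measure_iUnion_fintype_le _ _)
    _ = ∑ i, ENNReal.ofReal r * μHE[m] (F i) := Finset.mul_sum _ _ _
    _ ≤ ∑ i, ENNReal.ofReal (h i) * μHE[m] (F i) := by
        gcongr with i
        exact hrh i
    _ ≤ ∑ i, ((m + 1 : ℕ) : ENNReal) * volume (C i) :=
        Finset.sum_le_sum fun i _ =>
          cone_vol (u i) (hu i) (h i) (hr.trans_le (hrh i)) (hFm i) (fun y hy => hy.1.2)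
    _ = ((m + 1 : ℕ) : ENNReal) * volume (⋃ i, C i) := by
        rw [← Finset.mul_sum, measure_iUnion hCd hCm, tsum_fintype]
    _ ≤ _ := by gcongr

lemma poly_convex {m N : ℕ} (u : Fin N → EE m) (h : Fin N → ℝ) :
    Convex ℝ {x : EE m | ∀ i, inner ℝ (u i) x < h i} := by
  rw [Set.ofPred_forall]
  apply convex_iInter
  intro i
  exact convex_halfSpace_lt (f := fun x => inner ℝ (u i) x)
    ⟨fun x y => inner_add_right _ _ _, fun c x => by simp [inner_smul_right]⟩ _

lemma poly_open {m N : ℕ} (u : Fin N → EE m) (h : Fin N → ℝ) :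
    IsOpen {x : EE m | ∀ i, inner ℝ (u i) x < h i} := by
  rw [Set.ofPred_forall]
  exact isOpen_iInter_of_finite fun i => isOpen_lt (by fun_prop) continuous_const

lemma poly_closure {m N : ℕ} (u : Fin N → EE m) (h : Fin N → ℝ) :
    closure {x : EE m | ∀ i, inner ℝ (u i) x < h i} ⊆ {x : EE m | ∀ i, inner ℝ (u i) x ≤ h i} := by
  apply closure_minimal (fun x hx i => (hx i).le)
  rw [Set.ofPred_forall]
  exact isClosed_iInter fun i => isClosed_le (by fun_prop) continuous_const

open scoped Pointwise in
lemma closure_hull_sub {m : ℕ} {K Ω : Set (EE m)} (hK : IsCompact K) (hKΩ : K ⊆ Ω)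
    (ho : IsOpen Ω) (hc : Convex ℝ Ω) : closure (convexHull ℝ K) ⊆ Ω := by
  obtain ⟨δ, hδ, h⟩ := hK.exists_thickening_subset_open ho hKΩ
  have h1 : Metric.thickening δ (convexHull ℝ K) = convexHull ℝ (Metric.thickening δ K) := by
    rw [← add_ball_zero, ← add_ball_zero, convexHull_add, (convex_ball (0 : EE m) δ).convexHull_eq]
  exact (Metric.closure_subset_thickening hδ _).trans (h1 ▸ convexHull_min h hc)

lemma part_b {m : ℕ} {Ω : Set (EE m)} (ho : IsOpen Ω) (hb : Bornology.IsBounded Ω)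
    (hc : Convex ℝ Ω) {R : ℝ} (hR : ∀ x t, Metric.ball x t ⊆ Ω → t ≤ R) :
    volume Ω ≤ ENNReal.ofReal R * μHE[m] (frontier Ω) := by
  rw [ho.measure_eq_iSup_isCompact]
  refine iSup_le fun K => iSup_le fun hKΩ => iSup_le fun hK => ?_
  rcases K.eq_empty_or_nonempty with rfl | hne
  · simp
  obtain ⟨N, u, h, hu, hinj, hKP, hPU⟩ := exists_polytope
    (hb.subset (convexHull_min hKΩ hc)).isCompact_closure (convex_convexHull ℝ K).closure
    hne.convexHull.closure ho hb (closure_hull_sub hK hKΩ ho hc)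
  have hPΩ := (poly_closure u h).trans hPU
  calc volume K ≤ volume {x : EE m | ∀ i, inner ℝ (u i) x < h i} :=
        measure_mono fun x hx => hKP x (subset_closure (subset_convexHull ℝ K hx))
    _ ≤ ENNReal.ofReal R * μHE[m] (frontier {x : EE m | ∀ i, inner ℝ (u i) x < h i}) :=
        poly_b u h hu hinj fun x t hxt => hR x t (hxt.trans (subset_closure.trans hPΩ))
    _ ≤ _ := by
        refine mul_le_mul_right ?_ _
        exact perim_mono (poly_open u h) (poly_convex u h) hPΩ hb

lemma part_a0 {m : ℕ} {Ω : Set (EE m)} (ho : IsOpen Ω) (hb : Bornology.IsBounded Ω)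
    (hc : Convex ℝ Ω) {r : ℝ} (hr0 : 0 < r) (hr : Metric.ball 0 r ⊆ Ω) :
    ENNReal.ofReal r * μHE[m] (frontier Ω) ≤ ((m + 1 : ℕ) : ENNReal) * volume Ω := by
  have hcl : volume (closure Ω) = volume Ω := by
    apply le_antisymm _ (measure_mono subset_closure)
    rw [closure_eq_self_union_frontier]
    refine (measure_union_le _ _).trans ?_
    rw [hc.addHaar_frontier volume, add_zero]
  have hcpt : IsCompact (closure Ω) := hb.isCompact_closure
  have h0 : (0 : EE m) ∈ Ω := hr (Metric.mem_ball_self hr0)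
  have main : ∀ U : Set (EE m), IsOpen U → closure Ω ⊆ U →
      ENNReal.ofReal r * μHE[m] (frontier Ω) ≤ ((m + 1 : ℕ) : ENNReal) * volume U := by
    intro U hU hΩU
    obtain ⟨ρ, hρ⟩ := hb.closure.subset_ball (0 : EE m)
    obtain ⟨N, u, h, hu, -, hKP, hPU⟩ := exists_polytope hcpt hc.closure ⟨0, subset_closure h0⟩
      (hU.inter Metric.isOpen_ball) (Metric.isBounded_ball.subset Set.inter_subset_right)
      (Set.subset_inter hΩU hρ)
    have hPU' := (subset_closure.trans (poly_closure u h)).trans hPU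
    have hrh : ∀ i, r ≤ h i := by
      intro i
      apply le_of_forall_lt
      intro c hcr
      by_cases hc0 : c < 0
      · have := hKP 0 (subset_closure h0) i
        rw [inner_zero_right] at this
        linarith
      push Not at hc0
      have hm : c • u i ∈ Ω := by
        apply hr
        rw [mem_ball_zero_iff, norm_smul, hu i, Real.norm_of_nonneg hc0]
        linarith
      have := hKP _ (subset_closure hm) i
      rw [inner_smul_right, real_inner_self_eq_norm_sq, hu i] at this
      linarith
    calc ENNReal.ofReal r * μHE[m] (frontier Ω)
        ≤ ENNReal.ofReal r * μHE[m] (frontier {x : EE m | ∀ i, inner ℝ (u i) x < h i}) := by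
          refine mul_le_mul_right ?_ _
          exact perim_mono ho hc (fun x hx => hKP x hx)
            (Metric.isBounded_ball.subset (hPU'.trans Set.inter_subset_right))
      _ ≤ ((m + 1 : ℕ) : ENNReal) * volume {x : EE m | ∀ i, inner ℝ (u i) x < h i} :=
          poly_a u h hu hr0 hrh
      _ ≤ _ := by
          gcongr
          exact hPU'.trans Set.inter_subset_left
  rw [← hcl]
  have hm0 : ((m + 1 : ℕ) : ENNReal) ≠ 0 := by simp
  have hmt : ((m + 1 : ℕ) : ENNReal) ≠ ⊤ := ENNReal.natCast_ne_top _
  rw [mul_comm ((m + 1 : ℕ) : ENNReal), ← ENNReal.div_le_iff_le_mul (Or.inl hm0) (Or.inl hmt)]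
  rw [(closure Ω).measure_eq_iInf_isOpen volume]
  refine le_iInf fun U => le_iInf fun h1 => le_iInf fun h2 => ?_
  rw [ENNReal.div_le_iff_le_mul (Or.inl hm0) (Or.inl hmt), mul_comm (volume U)]
  exact main U h2 h1

lemma part_a {m : ℕ} {Ω : Set (EE m)} (ho : IsOpen Ω) (hb : Bornology.IsBounded Ω)
    (hc : Convex ℝ Ω) {r : ℝ} (hr0 : 0 < r) {x : EE m} (hr : Metric.ball x r ⊆ Ω) :
    ENNReal.ofReal r * μHE[m] (frontier Ω) ≤ ((m + 1 : ℕ) : ENNReal) * volume Ω := by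
  let e := Homeomorph.addRight (-x)
  have he : Isometry e := isometry_add_right (-x)
  have h1 := part_a0 (Ω := e '' Ω) (e.isOpenMap _ ho) ?_ ?_ hr0 ?_
  · rw [← e.image_frontier, he.euclideanHausdorffMeasure_image] at h1
    have h2 : volume (e '' Ω) = volume Ω := by
      change volume ((fun y => y + -x) '' Ω) = _
      simp
    rwa [h2] at h1
  · exact he.lipschitz.isBounded_image hb
  · have := hc.translate (-x)
    simpa [e, add_comm] using this
  · intro y hy
    refine ⟨y + x, hr ?_, ?_⟩
    · simpa [dist_eq_norm] using hy
    · simp [e]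

theorem nested_convex_perimeter_volume_ratio_le
    (n : ℕ)
    (Ω₁ Ω₂ : Set (EuclideanSpace ℝ (Fin n)))
    (hΩ₁o : IsOpen Ω₁) (hΩ₁b : Bornology.IsBounded Ω₁)
    (hΩ₁c : Convex ℝ Ω₁) (hΩ₁ne : (interior Ω₁).Nonempty)
    (hΩ₂o : IsOpen Ω₂) (hΩ₂b : Bornology.IsBounded Ω₂)
    (hΩ₂c : Convex ℝ Ω₂) (hΩ₂ne : (interior Ω₂).Nonempty)
    (hsub : Ω₂ ⊆ Ω₁) :
    ((μH[(n : ℝ) - 1] (frontier Ω₁)).toReal / (volume Ω₁).toReal) *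
      ((volume Ω₂).toReal / (μH[(n : ℝ) - 1] (frontier Ω₂)).toReal) ≤ (n : ℝ) := by
  obtain _ | m := n
  · have h1 : frontier Ω₁ = ∅ := by
      have h0 : Ω₁ = Set.univ := Subsingleton.eq_univ_of_nonempty (hΩ₁ne.mono interior_subset)
      rw [h0, frontier_univ]
    rw [h1]
    simp
  have hd : ((m + 1 : ℕ) : ℝ) - 1 = (m : ℝ) := by push_cast; ring
  rw [hd]
  set A₁ := (μH[(m : ℝ)] (frontier Ω₁)).toReal with hA₁
  set A₂ := (μH[(m : ℝ)] (frontier Ω₂)).toReal with hA₂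
  set V₁ := (volume Ω₁).toReal with hV₁
  set V₂ := (volume Ω₂).toReal with hV₂
  have hA₁0 : 0 ≤ A₁ := ENNReal.toReal_nonneg
  have hA₂0 : 0 ≤ A₂ := ENNReal.toReal_nonneg
  rcases hA₁0.eq_or_lt with h | hA₁p
  · rw [← h, zero_div, zero_mul]; positivity
  rcases hA₂0.eq_or_lt with h | hA₂p
  · rw [← h, div_zero, mul_zero]; positivity
  have hV₁p : 0 < V₁ := ENNReal.toReal_pos
    (hΩ₁o.measure_pos volume (hΩ₁ne.mono interior_subset)).ne' hΩ₁b.measure_lt_top.ne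
  obtain ⟨c, hc0, hc⟩ : ∃ c : NNReal, c ≠ 0 ∧ ∀ s : Set (EE m), μHE[m] s = c * μH[(m : ℝ)] s :=
    ⟨_, Measure.addHaarScalarFactor_volume_hausdorffMeasure_ne_zero m, fun s => by
      rw [Measure.euclideanHausdorffMeasure_def]; rfl⟩
  have hcp : 0 < (c : ℝ) := by positivity
  set R : ℝ := (m + 1) * V₁ / (c * A₁) with hRdef
  have hRp : 0 < R := by positivity
  have hR : ∀ x t, Metric.ball x t ⊆ Ω₂ → t ≤ R := by
    intro x t ht
    by_cases ht0 : t ≤ 0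
    · linarith
    push Not at ht0
    have h1 := part_a hΩ₁o hΩ₁b hΩ₁c ht0 (ht.trans hsub)
    rw [hc] at h1
    have h2 := ENNReal.toReal_mono
      (ENNReal.mul_ne_top (ENNReal.natCast_ne_top _) hΩ₁b.measure_lt_top.ne) h1
    simp only [ENNReal.toReal_mul, ENNReal.toReal_ofReal ht0.le, ENNReal.coe_toReal,
      ENNReal.toReal_natCast, ← hA₁, ← hV₁] at h2
    push_cast at h2
    rw [hRdef, le_div_iff₀ (by positivity)]
    exact h2
  have h3 := part_b hΩ₂o hΩ₂b hΩ₂c hR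
  rw [hc] at h3
  have hfin : μH[(m : ℝ)] (frontier Ω₂) ≠ ⊤ := (ENNReal.toReal_pos_iff.1 hA₂p).2.ne
  have h4 := ENNReal.toReal_mono
    (ENNReal.mul_ne_top ENNReal.ofReal_ne_top (ENNReal.mul_ne_top ENNReal.coe_ne_top hfin)) h3
  simp only [ENNReal.toReal_mul, ENNReal.toReal_ofReal hRp.le, ENNReal.coe_toReal,
    ← hA₂, ← hV₂] at h4
  calc A₁ / V₁ * (V₂ / A₂) ≤ A₁ / V₁ * (R * (c * A₂) / A₂) := by gcongr
    _ = ((m + 1 : ℕ) : ℝ) := by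
      rw [hRdef]; push_cast; field_simp
end
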